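/- arXiv:1701.01849 — 2 statements merged into one kernel-verified Lean document; each statement's English description precedes it below -/
import Mathlib

section
/- Density of GL-stable sets of unbounded q-rank: let V = ℕ →₀ k (the countable direct sum with standard basis (e_i)), and let GL_∞ be the group of k-linear automorphisms g of V for which there exists N with g(e_i) = e_i for all i ≥ N and g preserving the span of e_0,…,e_{N−1}. Let Z be a set of symmetric trilinear forms T : V × V × V → k that is stable under the GL_∞-action (T, g) ↦ T∘(g × g × g), and suppose that for every m ∈ ℕ there exists T ∈ Z whose associated cubic form v ↦ T(v,v,v) has q-rank at least m. Then Z is Zariski dense in the space of all symmetric trilinear forms: for every finite set F of triples (i,j,l) ∈ ℕ³ and every polynomial P in the variables indexed by F, if P((T(e_i,e_j,e_l))_{(i,j,l) ∈ F}) = 0 for all T ∈ Z, then P((T(e_i,e_j,e_l))_{(i,j,l) ∈ F}) = 0 for every symmetric trilinear form T on V. -/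
open scoped BigOperators

/-- The q-rank of a function `f : V → k`. -/
noncomputable def qrank (k : Type*) [Field k] {V : Type*} [AddCommGroup V] [Module k V]
    (f : V → k) : ℕ∞ :=
  sInf {r : ℕ∞ | ∃ m : ℕ, r = m ∧
    ∃ (ℓ : Fin m → (V →ₗ[k] k)) (q : Fin m → QuadraticForm k V),
      ∀ v, f v = ∑ i, ℓ i v * q i v}

/-- A trilinear form on `V = ℕ →₀ k` is symmetric if it is invariant under all
permutations of its three arguments. -/
def IsSymTri {k : Type*} [Field k]
    (T : MultilinearMap k (fun _ : Fin 3 => (ℕ →₀ k)) k) : Prop :=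
  ∀ (σ : Equiv.Perm (Fin 3)) (v : Fin 3 → (ℕ →₀ k)), T (v ∘ σ) = T v

/-- An automorphism of `V = ℕ →₀ k` belongs to `GL∞` if for some `N` it fixes `eᵢ`
for `i ≥ N` and preserves the span of `e₀, …, e_{N-1}`. -/
def IsGLinf {k : Type*} [Field k] (g : (ℕ →₀ k) ≃ₗ[k] (ℕ →₀ k)) : Prop :=
  ∃ N : ℕ, (∀ i, N ≤ i → g (Finsupp.single i 1) = Finsupp.single i 1) ∧
    (Submodule.span k {v : ℕ →₀ k | ∃ j < N, v = Finsupp.single j (1 : k)}).map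
        g.toLinearMap
      = Submodule.span k {v : ℕ →₀ k | ∃ j < N, v = Finsupp.single j (1 : k)}

/-- Evaluation of a coordinate polynomial function at a trilinear form: `P` is a
polynomial in the coordinates `T(eᵢ, eⱼ, eₗ)`. -/
noncomputable def coordEval {k : Type*} [Field k]
    (T : MultilinearMap k (fun _ : Fin 3 => (ℕ →₀ k)) k)
    (P : MvPolynomial (ℕ × ℕ × ℕ) k) : k :=
  MvPolynomial.eval
    (fun p => T ![Finsupp.single p.1 1, Finsupp.single p.2.1 1,
      Finsupp.single p.2.2 1]) P

open Polynomial TensorProduct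

/-!
Let `T` be a symmetric trilinear form and `u = (u_1, …, u_d)` vectors such that the functionals
`T(u_i, u_j, ·)`, `i ≤ j`, are linearly independent. As the characteristic is not `2`, every
symmetric `d × d` array is then of the form `T(u_i, u_j, w)`, and as it is not `3`, the derivative
of `u ↦ (T(u_i, u_j, u_l))` maps onto all symmetric arrays. The Newton method over `k[X]` therefore
lifts the line from `T(u, u, u)` to any symmetric array, modulo any power of `X`, so every
polynomial vanishing on the values of `T` on `d`-tuples vanishes on all symmetric arrays. The
equations of `Z` are of this kind: `GL_∞` moves `d` basis vectors to any independent `d`-tuple, and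
every `d`-tuple is a limit of independent ones.

Such a `u` exists once the q-rank exceeds `d ^ 2 + d`. Otherwise every `u` has a relation
`∑ c (i, m) T(u_i, u_m, ·) = 0` with `c (j, l) + c (l, j) ≠ 0` for some `j, l`. Put
`∂_j c = ∑ (c (j, m) + c (m, j)) u_m`, and choose `u` and `c` such that the rank of the functionals
`T(u_i, u_m, ·)` and then that of the bilinear form `T(∂_j c, ·, ·)` is maximal. Let `K` be the
common kernel of the `T(u_i, u_m, ·)`, of codimension at most `d ^ 2`. By maximality of the ranks,
the relation deforms with `u` when a `u_m` moves in an arbitrary direction `v`. To first order, with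
`m = j`, this shows that `K` lies in the radical of `T(∂_j c, ·, ·)`; to second order, with `m = l`,
that some `x` in `v + span u` satisfies `T(x, K, K) = 0`. So `{x ∈ K | T(x, K, K) = 0}` has
codimension at most `d ^ 2 + d`; since `T(x, x, x) = 0` there, this bounds the q-rank.
-/

section Minors

variable {R E F : Type*} [CommRing R]

theorem det_fromBlocks_mul_det_pow {m n : Type*} [Fintype m] [Fintype n] [DecidableEq m]
    [DecidableEq n] (A : Matrix m m R) (B : Matrix m n R) (C : Matrix n m R) (D : Matrix n n R) :
    (Matrix.fromBlocks A B C D).det * A.det ^ Fintype.card n =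
      A.det * (A.det • D - C * A.adjugate * B).det := by
  have column_reduction : Matrix.fromBlocks A B C D *
      Matrix.fromBlocks 1 (-(A.adjugate * B)) 0 (A.det • (1 : Matrix n n R)) =
        Matrix.fromBlocks A 0 C (A.det • D - C * A.adjugate * B) := by
    rw [Matrix.fromBlocks_multiply]
    congr 1
    · simp
    · simp [← Matrix.mul_assoc, Matrix.mul_adjugate]
    · simp
    · simp [← Matrix.mul_assoc, sub_eq_neg_add]
  simpa using congrArg Matrix.det column_reduction

/-- The (possibly infinite) matrix `a` has a nonvanishing `r × r` minor; over a field, this says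
that the rank of `a` is at least `r`. -/
def HasNonzeroMinor (a : Matrix E F R) (r : ℕ) : Prop :=
  ∃ (b : Fin r → E) (x : Fin r → F), (a.submatrix b x).det ≠ 0

theorem hasNonzeroMinor_zero [Nontrivial R] (a : Matrix E F R) : HasNonzeroMinor a 0 :=
  ⟨Fin.elim0, Fin.elim0, by simp⟩

theorem det_submatrix_mul_apply [IsDomain R] {a : Matrix E F R} {r : ℕ} {b : Fin r → E}
    {x : Fin r → F} (hdet : (a.submatrix b x).det ≠ 0) (hmax : ¬ HasNonzeroMinor a (r + 1))
    (e : E) (y : F) :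
    (a.submatrix b x).det * a e y =
      ∑ j, (∑ i, a e (x i) * (a.submatrix b x).adjugate i j) * a (b j) y := by
  have bordered_det : (Matrix.fromBlocks (a.submatrix b x) (a.submatrix b fun _ : Fin 1 => y)
      (a.submatrix (fun _ : Fin 1 => e) x) (a.submatrix (fun _ => e) fun _ => y)).det = 0 := by
    by_contra hne
    refine hmax ⟨Fin.append b fun _ : Fin 1 => e, Fin.append x fun _ : Fin 1 => y, ?_⟩
    rw [← Matrix.det_submatrix_equiv_self (finSumFinEquiv (m := r) (n := 1))]
    convert hne using 2
    ext (i | i) (j | j) <;> simp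
  have schur := det_fromBlocks_mul_det_pow (a.submatrix b x) (a.submatrix b fun _ : Fin 1 => y)
    (a.submatrix (fun _ : Fin 1 => e) x) (a.submatrix (fun _ => e) fun _ => y)
  rw [bordered_det, zero_mul, Matrix.det_fin_one] at schur
  simpa [Matrix.mul_apply, sub_eq_zero] using (mul_eq_zero.mp schur.symm).resolve_left hdet

/-- The matrix of a bilinear pairing, with rows and columns indexed by all vectors. -/
def pairingMatrix {k E F : Type*} [CommRing k] [AddCommGroup E] [Module k E] [AddCommGroup F]
    [Module k F] (B : E →ₗ[k] F →ₗ[k] k) : Matrix E F k :=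
  Matrix.of fun e f => B e f

theorem HasNonzeroMinor.le_finrank {k E F G : Type*} [Field k] [AddCommGroup E] [Module k E]
    [AddCommGroup F] [Module k F] [AddCommGroup G] [Module k G] [Module.Finite k G]
    {B : E →ₗ[k] F →ₗ[k] k} {r : ℕ} (h : HasNonzeroMinor (pairingMatrix B) r) (φ : E →ₗ[k] G)
    (hφ : LinearMap.ker φ ≤ LinearMap.ker B) : r ≤ Module.finrank k G := by
  obtain ⟨b, x, hdet⟩ := h
  have hB : LinearIndependent k (B ∘ b) :=
    .of_comp (LinearMap.pi fun j => LinearMap.applyₗ (x j))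
      (Matrix.linearIndependent_rows_of_det_ne_zero hdet)
  have hφb : LinearIndependent k (φ ∘ b) := by
    rw [Fintype.linearIndependent_iff] at hB ⊢
    intro g hg
    refine hB g ?_
    have hker : ∑ i, g i • b i ∈ LinearMap.ker φ := by simpa using hg
    simpa using hφ hker
  simpa using hφb.fintype_card_le_finrank

end Minors

section PolynomialFamilies

variable {k E F : Type*}

section CommRing

variable [CommRing k] {a : Matrix E F k[X]} {r : ℕ}

theorem eval_det_eq_det_map {n : Type*} [Fintype n] [DecidableEq n] (M : Matrix n n k[X]) (s : k) :
    M.det.eval s = (M.map (eval s)).det :=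
  (evalRingHom s).map_det M

theorem HasNonzeroMinor.exists_eval_ne_zero (h : HasNonzeroMinor (a.map (eval 0)) r) :
    ∃ D : k[X], D.eval 0 ≠ 0 ∧ ∀ s, D.eval s ≠ 0 → HasNonzeroMinor (a.map (eval s)) r := by
  obtain ⟨b, x, hdet⟩ := h
  refine ⟨(a.submatrix b x).det, ?_, fun s hs => ⟨b, x, ?_⟩⟩
  · rwa [eval_det_eq_det_map]
  · rwa [eval_det_eq_det_map] at hs

theorem not_hasNonzeroMinor_of_eval [IsDomain k] [Infinite k] {D : k[X]} (hD : D ≠ 0)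
    (h : ∀ s, D.eval s ≠ 0 → ¬ HasNonzeroMinor (a.map (eval s)) r) : ¬ HasNonzeroMinor a r := by
  rintro ⟨b, x, hdet⟩
  refine mul_ne_zero hD hdet (Polynomial.funext fun s => ?_)
  rw [eval_mul, eval_zero, mul_eq_zero, or_iff_not_imp_left]
  intro hs
  by_contra hne
  exact h s hs ⟨b, x, by rwa [eval_det_eq_det_map] at hne⟩

end CommRing

variable [Field k] {a : Matrix E F k[X]} {r : ℕ}

theorem exists_row_relation (h0 : HasNonzeroMinor (a.map (eval 0)) r)
    (hmax : ¬ HasNonzeroMinor a (r + 1)) (e : E) (he : ∀ y, (a e y).eval 0 = 0) :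
    ∃ (D : k[X]) (b : Fin r → E) (p : Fin r → k[X]), D.eval 0 = 1 ∧ (∀ j, (p j).eval 0 = 0) ∧
      ∀ y, D * a e y = ∑ j, p j * a (b j) y := by
  obtain ⟨b, x, hdet⟩ := h0
  set D := (a.submatrix b x).det
  have hD0 : D.eval 0 ≠ 0 := by rwa [eval_det_eq_det_map]
  have hD : D ≠ 0 := fun h => hD0 (by rw [h, eval_zero])
  let p : Fin r → k[X] := fun j => ∑ i, a e (x i) * (a.submatrix b x).adjugate i j
  refine ⟨C (D.eval 0)⁻¹ * D, b, fun j => C (D.eval 0)⁻¹ * p j, by simp [hD0], ?_, fun y => ?_⟩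
  · simp [p, eval_finsetSum, he]
  · simp_rw [mul_assoc, ← Finset.mul_sum]
    rw [det_submatrix_mul_apply hD hmax]

theorem X_sq_dvd_of_eval_zero (h0 : HasNonzeroMinor (a.map (eval 0)) r)
    (hmax : ¬ HasNonzeroMinor a (r + 1)) {e : E} {y : F} (he : ∀ y, (a e y).eval 0 = 0)
    (hy : ∀ e, (a e y).eval 0 = 0) : X ^ 2 ∣ a e y := by
  obtain ⟨D, b, p, hD, hp, hrel⟩ := exists_row_relation h0 hmax e he
  simp only [← coeff_zero_eq_eval_zero, ← X_dvd_iff] at hp hy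
  have hXD : ¬ X ∣ D := by simp [X_dvd_iff, coeff_zero_eq_eval_zero, hD]
  refine prime_X.pow_dvd_of_dvd_mul_left 2 hXD ?_
  rw [hrel, sq]
  exact Finset.dvd_sum fun j _ => mul_dvd_mul (hp j) (hy _)

end PolynomialFamilies

/-- A function of three arguments is symmetric. It suffices to ask for invariance under two
transpositions generating `S₃`. -/
structure Symmetric₃ {α β : Type*} (f : α → α → α → β) : Prop where
  swap_left (x y z : α) : f x y z = f y x z
  swap_right (x y z : α) : f x y z = f x z y

/-- Trilinear forms on `M`, in curried form. -/
abbrev TrilinForm (R M : Type*) [CommRing R] [AddCommGroup M] [Module R M] : Type _ :=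
  M →ₗ[R] M →ₗ[R] M →ₗ[R] R

namespace TrilinForm

section CommRing

variable {R M ι : Type*} [CommRing R] [AddCommGroup M] [Module R M]

/-- Symmetry of a trilinear form. -/
def IsSymm (T : TrilinForm R M) : Prop :=
  Symmetric₃ fun x y z => T x y z

/-- The vectors `x` such that `T(x, ·, ·)` vanishes on `S × S`. -/
def annihilator (T : TrilinForm R M) (S : Submodule R M) : Submodule R M where
  carrier := {x | ∀ y ∈ S, ∀ z ∈ S, T x y z = 0}
  add_mem' hx hx' y hy z hz := by simp [hx y hy z hz, hx' y hy z hz]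
  zero_mem' := by simp
  smul_mem' a x hx y hy z hz := by simp [hx y hy z hz]

/-- The linear map `y ↦ (T(u_i, u_j, y))_{i, j}`. Its kernel has codimension at most
`(card ι) ^ 2`. -/
def polarMap (T : TrilinForm R M) (u : ι → M) : M →ₗ[R] (ι × ι → R) :=
  LinearMap.pi fun p => T (u p.1) (u p.2)

theorem apply_eq_zero_of_mem_ker_polarMap {T : TrilinForm R M} {u : ι → M} {y : M}
    (hy : y ∈ (T.polarMap u).ker) (i j : ι) : T (u i) (u j) y = 0 :=
  congrFun (LinearMap.mem_ker.mp hy) (i, j)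

variable [Fintype ι]

/-- The functional `∑ c (j, l) T(u_j, u_l, ·)`, as a linear function of the coefficients `c`. -/
def contract (T : TrilinForm R M) (u : ι → M) : (ι × ι → R) →ₗ[R] M →ₗ[R] R :=
  Fintype.linearCombination R fun p => T (u p.1) (u p.2)

theorem contract_apply (T : TrilinForm R M) (u : ι → M) (c : ι × ι → R) (y : M) :
    T.contract u c y = ∑ p, c p * T (u p.1) (u p.2) y := by
  simp [contract, Fintype.linearCombination_apply]

/-- The `j`-th partial derivative `∑ l, (c (j, l) + c (l, j)) u_l` of the quadratic expression
`∑ c (j, l) u_j u_l`. -/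
def partialVec (c : ι × ι → R) (u : ι → M) (j : ι) : M :=
  ∑ l, (c (j, l) + c (l, j)) • u l

theorem partialVec_add_single [DecidableEq ι] (c : ι × ι → R) (u : ι → M) (j l : ι) (v : M) :
    partialVec c (u + Pi.single l v) j = partialVec c u j + (c (j, l) + c (l, j)) • v := by
  simp [partialVec, Finset.sum_add_distrib, Pi.single_apply]

theorem contract_add_single [DecidableEq ι] {T : TrilinForm R M} (hT : T.IsSymm) (u : ι → M)
    (j : ι) (v : M) (c : ι × ι → R) (y : M) :
    T.contract (u + Pi.single j v) c y =
      T.contract u c y + T (partialVec c u j) v y + c (j, j) * T v v y := by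
  have sum_single (f : M →ₗ[R] R) (b : ι → R) :
      ∑ l, b l * f ((Pi.single j v : ι → M) l) = b j * f v := by
    rw [Finset.sum_eq_single j (by simp +contextual) (by simp), Pi.single_eq_same]
  have sum_right (x : M) (b : ι → R) :
      ∑ l, b l * T x ((Pi.single j v : ι → M) l) y = b j * T x v y :=
    sum_single ((T x).flip y) b
  have sum_left (x : M) (b : ι → R) :
      ∑ l, b l * T ((Pi.single j v : ι → M) l) x y = b j * T x v y := by
    simp_rw [hT.swap_left _ x, sum_right]
  have expand : T.contract (u + Pi.single j v) c y = T.contract u c y +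
      (∑ l, c (j, l) * T (u l) v y + ∑ l, c (l, j) * T (u l) v y) + c (j, j) * T v v y := by
    simp only [contract_apply, Fintype.sum_prod_type, Pi.add_apply, map_add, LinearMap.add_apply,
      mul_add, Finset.sum_add_distrib, sum_right, sum_left]
    rw [Finset.sum_comm (f := fun l m => c (l, m) * T ((Pi.single j v : ι → M) l) (u m) y)]
    simp only [sum_left]
    ring
  simp only [expand, partialVec, map_sum, map_smul, LinearMap.sum_apply, LinearMap.smul_apply,
    smul_eq_mul, add_mul, Finset.sum_add_distrib]

/-- The functionals `T(u_j, u_l, ·)` satisfy no linear relations but those forced by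
`T(u_j, u_l, ·) = T(u_l, u_j, ·)`. -/
def IsSymIndependent (T : TrilinForm R M) (u : ι → M) : Prop :=
  ∀ c : ι × ι → R, T.contract u c = 0 → ∀ j l, c (j, l) + c (l, j) = 0

end CommRing

section BaseChange

variable {k V : Type*} [CommRing k] [AddCommGroup V] [Module k V]

/-- Extension of scalars of a trilinear form. -/
noncomputable def baseChange (A : Type*) [CommRing A] [Algebra k A] (T : TrilinForm k V) :
    TrilinForm A (A ⊗[k] V) :=
  let extendLinear := ((LinearMap.liftBaseChangeEquiv A).toLinearMap.restrictScalars k) ∘ₗ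
    (Algebra.linearMap k A).compRight k (M := V)
  let extendBilinear := ((LinearMap.liftBaseChangeEquiv A).toLinearMap.restrictScalars k) ∘ₗ
    extendLinear.compRight k (M := V)
  (extendBilinear ∘ₗ T).liftBaseChange A

@[simp]
theorem baseChange_tmul (A : Type*) [CommRing A] [Algebra k A] (T : TrilinForm k V) (a b c : A)
    (x y z : V) :
    T.baseChange A (a ⊗ₜ x) (b ⊗ₜ y) (c ⊗ₜ z) = a * b * c * algebraMap k A (T x y z) := by
  simp [baseChange, mul_assoc]

theorem IsSymm.baseChange (A : Type*) [CommRing A] [Algebra k A] {T : TrilinForm k V}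
    (hT : T.IsSymm) : (T.baseChange A).IsSymm where
  swap_left x y z := by
    have : T.baseChange A = (T.baseChange A).flip := by
      ext x y z
      simp [hT.swap_left x y z]
    exact congr($this x y z)
  swap_right x y z := by
    have : T.baseChange A = LinearMap.lflip.toLinearMap ∘ₗ T.baseChange A := by
      ext x y z
      simp [hT.swap_right x y z]
    exact congr($this x y z)

/-- Specialization at `X = s` of a vector with polynomial coefficients. -/
noncomputable def evalAt (s : k) : k[X] ⊗[k] V →ₗ[k] V :=
  TensorProduct.lid k V ∘ₗ LinearMap.rTensor V (leval s)

@[simp]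
theorem evalAt_tmul (s : k) (p : k[X]) (v : V) : evalAt s (p ⊗ₜ v) = p.eval s • v := by
  simp [evalAt]

@[simp]
theorem evalAt_smul (s : k) (p : k[X]) (m : k[X] ⊗[k] V) :
    evalAt s (p • m) = p.eval s • evalAt s m := by
  induction m with
  | zero => simp
  | tmul q v => simp [smul_tmul', mul_smul]
  | add m₁ m₂ h₁ h₂ => simp [h₁, h₂]

theorem eval_baseChange (T : TrilinForm k V) (s : k) (x y z : k[X] ⊗[k] V) :
    (T.baseChange k[X] x y z).eval s = T (evalAt s x) (evalAt s y) (evalAt s z) := by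
  induction x with
  | zero => simp
  | add x₁ x₂ h₁ h₂ => simp [h₁, h₂]
  | tmul p x =>
    induction y with
    | zero => simp
    | add y₁ y₂ h₁ h₂ => simp [h₁, h₂]
    | tmul q y =>
      induction z with
      | zero => simp
      | add z₁ z₂ h₁ h₂ => simp only [map_add, eval_add, h₁, h₂]
      | tmul r z => simp [mul_left_comm, mul_assoc]

variable {ι : Type*} [Fintype ι]

theorem eval_contract_baseChange (T : TrilinForm k V) (U : ι → k[X] ⊗[k] V)
    (c : ι × ι → k[X]) (y : V) (s : k) :
    ((T.baseChange k[X]).contract U c (1 ⊗ₜ y)).eval s =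
      T.contract (evalAt s ∘ U) (eval s ∘ c) y := by
  simp [contract_apply, eval_finsetSum, eval_baseChange]

theorem evalAt_partialVec (c : ι × ι → k[X]) (U : ι → k[X] ⊗[k] V) (j : ι) (s : k) :
    evalAt s (partialVec c U j) = partialVec (eval s ∘ c) (evalAt s ∘ U) j := by
  simp [partialVec]

end BaseChange

end TrilinForm

theorem exists_and_forall_not_succ {α : Type*} {P : α → ℕ → Prop} {n : ℕ} (h0 : ∃ x, P x 0)
    (hn : ∀ x r, P x r → r ≤ n) : ∃ r, (∃ x, P x r) ∧ ∀ x, ¬ P x (r + 1) := by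
  have hsucc : ∃ r, ∀ x, ¬ P x r := ⟨n + 1, fun x hx => Nat.not_succ_le_self n (hn x _ hx)⟩
  simpa using Nat.exists_not_and_succ_of_not_zero_of_exists (p := fun r => ∀ x, ¬ P x r)
    (by simpa using h0) hsucc

namespace TrilinForm

section GenericRelations

variable {k V ι : Type*} [Fintype ι] [Field k] [AddCommGroup V] [Module k V] {T : TrilinForm k V}

theorem map_eval_contract_baseChange (T : TrilinForm k V) (U : ι → k[X] ⊗[k] V) (s : k) :
    (Matrix.of fun (c : ι × ι → k) y =>
        (T.baseChange k[X]).contract U (C ∘ c) (1 ⊗ₜ y)).map (eval s) =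
      pairingMatrix (T.contract (evalAt s ∘ U)) := by
  ext c y
  have hc : eval s ∘ C ∘ c = c := by ext p; simp
  rw [Matrix.map_apply, Matrix.of_apply, eval_contract_baseChange, hc, pairingMatrix,
    Matrix.of_apply]

theorem exists_eval_ne_zero_hasNonzeroMinor_contract {U : ι → k[X] ⊗[k] V} {ρ : ℕ}
    (h0 : HasNonzeroMinor (pairingMatrix (T.contract (evalAt 0 ∘ U))) ρ) :
    ∃ D : k[X], D.eval 0 ≠ 0 ∧
      ∀ s, D.eval s ≠ 0 → HasNonzeroMinor (pairingMatrix (T.contract (evalAt s ∘ U))) ρ := by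
  simp only [← map_eval_contract_baseChange] at h0 ⊢
  exact h0.exists_eval_ne_zero

theorem exists_relation_lift [Infinite k] {ρ : ℕ}
    (hmax : ∀ u : ι → V, ¬ HasNonzeroMinor (pairingMatrix (T.contract u)) (ρ + 1))
    {U : ι → k[X] ⊗[k] V}
    (h0 : HasNonzeroMinor (pairingMatrix (T.contract (evalAt 0 ∘ U))) ρ) {c : ι × ι → k}
    (hc : T.contract (evalAt 0 ∘ U) c = 0) :
    ∃ ĉ : ι × ι → k[X], eval 0 ∘ ĉ = c ∧
      ∀ y : V, (T.baseChange k[X]).contract U ĉ (1 ⊗ₜ y) = 0 := by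
  let a : Matrix (ι × ι → k) V k[X] :=
    .of fun c y => (T.baseChange k[X]).contract U (C ∘ c) (1 ⊗ₜ y)
  have ha (s : k) : a.map (eval s) = pairingMatrix (T.contract (evalAt s ∘ U)) :=
    map_eval_contract_baseChange T U s
  have hrow (y : V) : (a c y).eval 0 = 0 :=
    congr($(ha 0) c y).trans congr($hc y)
  have hamax : ¬ HasNonzeroMinor a (ρ + 1) :=
    not_hasNonzeroMinor_of_eval one_ne_zero fun s _ => by rw [ha]; exact hmax _
  obtain ⟨D, b, p, hD, hp, hrel⟩ := exists_row_relation (by rwa [ha]) hamax c hrow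
  refine ⟨D • (C ∘ c) - ∑ i, p i • (C ∘ b i), ?_, fun y => ?_⟩
  · ext q
    simp [hD, hp, eval_finsetSum]
  · simpa [sub_eq_zero, a] using hrel y

-- Deform `u_j` to `u_j + X v`. As the rank of `T.contract u` is already maximal, the relation `c`
-- deforms along with `u`, and its term of order `X` at `y` is `T (partialVec c u j) v y`.
theorem apply_partialVec_eq_zero [Infinite k] (hT : T.IsSymm) {ρ : ℕ}
    (hmax : ∀ u : ι → V, ¬ HasNonzeroMinor (pairingMatrix (T.contract u)) (ρ + 1)) {u : ι → V}
    (hu : HasNonzeroMinor (pairingMatrix (T.contract u)) ρ) {c : ι × ι → k}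
    (hc : T.contract u c = 0) {y : V} (hy : y ∈ (T.polarMap u).ker) (j : ι) (v : V) :
    T (partialVec c u j) v y = 0 := by
  classical
  let u₀ : ι → k[X] ⊗[k] V := fun i => 1 ⊗ₜ u i
  let U := u₀ + Pi.single j ((X : k[X]) • (1 ⊗ₜ v))
  have hu₀ : evalAt 0 ∘ u₀ = u := by ext1 i; simp [u₀]
  have hU : evalAt 0 ∘ U = u := by
    ext1 i
    rcases eq_or_ne i j with rfl | hij <;> simp [U, u₀, *]
  obtain ⟨ĉ, hĉ, hrel⟩ := exists_relation_lift hmax (U := U) (by rwa [hU]) (by rwa [hU])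
  have hcontract : (T.baseChange k[X]).contract u₀ ĉ (1 ⊗ₜ y) = 0 := by
    simp [contract_apply, u₀, apply_eq_zero_of_mem_ker_polarMap hy]
  have hX : X * (T.baseChange k[X] (partialVec ĉ u₀ j) (1 ⊗ₜ v) (1 ⊗ₜ y) +
      X * (ĉ (j, j) * C (T v v y))) = 0 := by
    have h := hrel y
    rw [contract_add_single (hT.baseChange _), hcontract] at h
    simp only [map_smul, LinearMap.smul_apply, smul_eq_mul, baseChange_tmul, zero_add] at h
    rw [← h, algebraMap_eq]
    ring
  have h0 := congrArg (eval 0) ((mul_eq_zero.mp hX).resolve_left X_ne_zero)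
  simpa [eval_baseChange, evalAt_partialVec, hĉ, hu₀] using h0

/-- A relation `∑ c (i, m) T(u_i, u_m, ·) = 0` not forced by symmetry, witnessed at the index pair
`(j, l)`, between vectors `u` for which the rank of `T.contract u` is at least `ρ`. -/
structure IsGenericRelation (T : TrilinForm k V) (ρ : ℕ) (j l : ι) (u : ι → V) (c : ι × ι → k) :
    Prop where
  hasNonzeroMinor : HasNonzeroMinor (pairingMatrix (T.contract u)) ρ
  contract_eq_zero : T.contract u c = 0
  coeff_ne_zero : c (j, l) + c (l, j) ≠ 0

theorem IsGenericRelation.le_card_sq [Infinite k] (hT : T.IsSymm) {ρ : ℕ}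
    (hmax : ∀ u : ι → V, ¬ HasNonzeroMinor (pairingMatrix (T.contract u)) (ρ + 1)) {j l : ι}
    {u : ι → V} {c : ι × ι → k} (h : T.IsGenericRelation ρ j l u c) {r : ℕ}
    (hr : HasNonzeroMinor (pairingMatrix (T (partialVec c u j))) r) :
    r ≤ Fintype.card (ι × ι) := by
  rw [← Module.finrank_fintype_fun_eq_card k]
  refine hr.le_finrank (T.polarMap u) fun y hy => LinearMap.ext fun z => ?_
  rw [hT.swap_right]
  exact apply_partialVec_eq_zero hT hmax h.hasNonzeroMinor h.contract_eq_zero hy j z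

-- The bilinear forms `T (partialVec c U j)` have constant rank near `X = 0`, so they vanish to
-- second order on the radical of their value at `X = 0`.
theorem IsGenericRelation.X_sq_dvd_baseChange [Infinite k] (hT : T.IsSymm) {ρ r : ℕ}
    (hρ : ∀ u : ι → V, ¬ HasNonzeroMinor (pairingMatrix (T.contract u)) (ρ + 1)) {j l : ι}
    (hr : ∀ u c, T.IsGenericRelation ρ j l u c →
      ¬ HasNonzeroMinor (pairingMatrix (T (partialVec c u j))) (r + 1))
    {U : ι → k[X] ⊗[k] V} {c : ι × ι → k[X]}
    (h : T.IsGenericRelation ρ j l (evalAt 0 ∘ U) (eval 0 ∘ c))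
    (hc : ∀ y : V, (T.baseChange k[X]).contract U c (1 ⊗ₜ y) = 0)
    (hminor : HasNonzeroMinor
      (pairingMatrix (T (partialVec (eval 0 ∘ c) (evalAt 0 ∘ U) j))) r)
    {y z : V} (hy : y ∈ (T.polarMap (evalAt 0 ∘ U)).ker)
    (hz : z ∈ (T.polarMap (evalAt 0 ∘ U)).ker) :
    X ^ 2 ∣ T.baseChange k[X] (partialVec c U j) (1 ⊗ₜ y) (1 ⊗ₜ z) := by
  let a : Matrix V V k[X] :=
    .of fun y z => T.baseChange k[X] (partialVec c U j) (1 ⊗ₜ y) (1 ⊗ₜ z)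
  have ha (s : k) : a.map (eval s) =
      pairingMatrix (T (partialVec (eval s ∘ c) (evalAt s ∘ U) j)) := by
    ext y z
    simp [a, pairingMatrix, eval_baseChange, evalAt_partialVec]
  have hzero (v : V) {y : V} (hy : y ∈ (T.polarMap (evalAt 0 ∘ U)).ker) : (a v y).eval 0 = 0 :=
    congr($(ha 0) v y).trans
      (apply_partialVec_eq_zero hT hρ h.hasNonzeroMinor h.contract_eq_zero hy j v)
  have ha_symm (v w : V) : a v w = a w v := (hT.baseChange k[X]).swap_right _ _ _
  obtain ⟨D, hD0, hD⟩ := exists_eval_ne_zero_hasNonzeroMinor_contract h.hasNonzeroMinor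
  have hne : D * (c (j, l) + c (l, j)) ≠ 0 := fun h0 => by
    have heval := congrArg (eval 0) h0
    rw [eval_mul, eval_add, eval_zero] at heval
    exact mul_ne_zero hD0 h.coeff_ne_zero heval
  have hmax : ¬ HasNonzeroMinor a (r + 1) := by
    refine not_hasNonzeroMinor_of_eval hne fun s hs => ?_
    rw [eval_mul, eval_add, mul_ne_zero_iff] at hs
    rw [ha]
    refine hr _ _ ⟨hD s hs.1, LinearMap.ext fun y => ?_, hs.2⟩
    rw [← eval_contract_baseChange, hc, eval_zero, LinearMap.zero_apply]
  exact X_sq_dvd_of_eval_zero (by rwa [ha]) hmax (fun v => ha_symm y v ▸ hzero v hy)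
    fun v => hzero v hz

theorem IsGenericRelation.span_sup_annihilator_eq_top [Infinite k] (hT : T.IsSymm) {ρ r : ℕ}
    (hρ : ∀ u : ι → V, ¬ HasNonzeroMinor (pairingMatrix (T.contract u)) (ρ + 1)) {j l : ι}
    (hr : ∀ u c, T.IsGenericRelation ρ j l u c →
      ¬ HasNonzeroMinor (pairingMatrix (T (partialVec c u j))) (r + 1))
    {u : ι → V} {c : ι × ι → k} (h : T.IsGenericRelation ρ j l u c)
    (hminor : HasNonzeroMinor (pairingMatrix (T (partialVec c u j))) r) :
    Submodule.span k (Set.range u) ⊔ T.annihilator (T.polarMap u).ker = ⊤ := by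
  classical
  refine Submodule.eq_top_iff'.mpr fun v => ?_
  let u₀ : ι → k[X] ⊗[k] V := fun i => 1 ⊗ₜ u i
  let U := u₀ + Pi.single l ((X : k[X]) • (1 ⊗ₜ v))
  have hU : evalAt 0 ∘ U = u := by
    ext1 i
    rcases eq_or_ne i l with rfl | hil <;> simp [U, u₀, *]
  obtain ⟨ĉ, rfl, hrel⟩ := exists_relation_lift hρ (U := U)
    (by simpa only [hU] using h.hasNonzeroMinor) (by simpa only [hU] using h.contract_eq_zero)
  let w := ∑ i, (ĉ (j, i) + ĉ (i, j)).coeff 1 • u i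
  let γ := (ĉ (j, l) + ĉ (l, j)).eval 0
  have hγ : γ ≠ 0 := by simpa [γ] using h.coeff_ne_zero
  have hw : w ∈ Submodule.span k (Set.range u) :=
    Submodule.sum_mem _ fun i _ => Submodule.smul_mem _ _ (Submodule.subset_span ⟨i, rfl⟩)
  have hwv : w + γ • v ∈ T.annihilator (T.polarMap u).ker := fun y hy z hz => by
    rw [← hU] at h hminor hy hz
    have hdvd := h.X_sq_dvd_baseChange hT hρ hr hrel hminor hy hz
    have hcoeff := X_pow_dvd_iff.mp hdvd 1 one_lt_two
    rw [partialVec_add_single] at hcoeff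
    simpa [partialVec, u₀, w, γ, ← mul_assoc, coeff_zero_eq_eval_zero] using hcoeff
  have hv : v = γ⁻¹ • (w + γ • v) - γ⁻¹ • w := by simp [hγ]
  rw [hv]
  exact sub_mem (Submodule.mem_sup_right (Submodule.smul_mem _ _ hwv))
    (Submodule.mem_sup_left (Submodule.smul_mem _ _ hw))

theorem exists_span_sup_annihilator_eq_top [Infinite k] (hT : T.IsSymm)
    (h : ∀ u : ι → V, ¬ T.IsSymIndependent u) :
    ∃ u : ι → V, Submodule.span k (Set.range u) ⊔ T.annihilator (T.polarMap u).ker = ⊤ := by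
  have hbound (u : ι → V) (ρ : ℕ) (hu : HasNonzeroMinor (pairingMatrix (T.contract u)) ρ) :
      ρ ≤ Module.finrank k (ι × ι → k) :=
    hu.le_finrank .id (by simp)
  obtain ⟨ρ, ⟨u, hu⟩, hρ⟩ :=
    exists_and_forall_not_succ ⟨0, hasNonzeroMinor_zero (pairingMatrix (T.contract 0))⟩ hbound
  obtain ⟨c, hc, j, l, hjl⟩ : ∃ c, T.contract u c = 0 ∧ ∃ j l, c (j, l) + c (l, j) ≠ 0 := by
    simpa [IsSymIndependent] using h u
  obtain ⟨r, ⟨⟨u, c⟩, hrel, hminor⟩, hr⟩ :=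
    exists_and_forall_not_succ (α := (ι → V) × (ι × ι → k))
      (P := fun x r => T.IsGenericRelation ρ j l x.1 x.2 ∧
        HasNonzeroMinor (pairingMatrix (T (partialVec x.2 x.1 j))) r)
      ⟨(u, c), ⟨hu, hc, hjl⟩, hasNonzeroMinor_zero _⟩
      fun _ _ hx => hx.1.le_card_sq hT hρ hx.2
  exact ⟨u, hrel.span_sup_annihilator_eq_top hT hρ
    (fun u' c' hrel' hminor' => hr (u', c') ⟨hrel', hminor'⟩) hminor⟩

end GenericRelations

end TrilinForm

section QRank

variable {k V G ι : Type*} [Field k] [AddCommGroup V] [Module k V] [AddCommGroup G] [Module k G]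

theorem finrank_quotient_le_card [Fintype ι] {u : ι → V} {E : Submodule k V}
    (h : Submodule.span k (Set.range u) ⊔ E = ⊤) :
    Module.Finite k (V ⧸ E) ∧ Module.finrank k (V ⧸ E) ≤ Fintype.card ι := by
  have hrange : (E.mkQ ∘ₗ Fintype.linearCombination k u).range = ⊤ := by
    rw [LinearMap.range_comp, Fintype.range_linearCombination,
      Submodule.map_mkQ_eq_top, sup_comm, h]
  refine ⟨.of_surjective _ (LinearMap.range_eq_top.mp hrange), ?_⟩
  have hle := (E.mkQ ∘ₗ Fintype.linearCombination k u).finrank_range_le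
  rwa [hrange, finrank_top, Module.finrank_fintype_fun_eq_card] at hle

theorem exists_eq_ker_add_sum_smul [Module.Finite k G] (φ : V →ₗ[k] G) :
    ∃ (ℓ : Fin (Module.finrank k φ.range) → V →ₗ[k] k) (e : Fin (Module.finrank k φ.range) → V)
      (π : V →ₗ[k] V), (∀ v, π v ∈ φ.ker) ∧ ∀ v, v = π v + ∑ i, ℓ i v • e i := by
  let b := Module.finBasis k φ.range
  choose e he using fun i => φ.surjective_rangeRestrict (b i)
  let ℓ := fun i => b.coord i ∘ₗ φ.rangeRestrict
  refine ⟨ℓ, e, .id - ∑ i, (ℓ i).smulRight (e i), fun v => ?_, by simp⟩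
  rw [← φ.ker_rangeRestrict, LinearMap.mem_ker]
  simp [he, ℓ, b.sum_repr]

theorem qrank_le_finrank [Module.Finite k G] (T : TrilinForm k V) (φ : V →ₗ[k] G)
    (hφ : ∀ x ∈ φ.ker, T x x x = 0) : qrank k (fun v => T v v v) ≤ Module.finrank k G := by
  suffices h : qrank k (fun v => T v v v) ≤ Module.finrank k φ.range from
    h.trans (mod_cast φ.range.finrank_le)
  obtain ⟨ℓ, e, π, hπ, hdecomp⟩ := exists_eq_ker_add_sum_smul φ
  let Q : (V →ₗ[k] V →ₗ[k] k) → QuadraticForm k V := LinearMap.BilinMap.toQuadraticMap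
  refine sInf_le ⟨_, rfl, ℓ, fun i => Q (T.compl₁₂ π π |>.compr₂ (LinearMap.applyₗ (e i))) +
    Q (T.flip (e i) ∘ₗ π) + Q (T (e i)), fun v => ?_⟩
  have expand (f : V →ₗ[k] k) : f v = f (π v) + ∑ i, ℓ i v * f (e i) := by
    conv_lhs => rw [hdecomp v]
    simp
  calc T v v v = T (π v) v v + ∑ i, ℓ i v * T (e i) v v := expand ((T.flip v).flip v)
    _ = T (π v) (π v) v + ∑ i, ℓ i v * T (π v) (e i) v + ∑ i, ℓ i v * T (e i) v v :=
      congrArg (· + _) (expand ((T (π v)).flip v))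
    _ = ∑ i, ℓ i v * T (π v) (π v) (e i) + ∑ i, ℓ i v * T (π v) (e i) v +
        ∑ i, ℓ i v * T (e i) v v := by
      rw [expand (T (π v) (π v)), hφ _ (hπ v), zero_add]
    _ = _ := by
      simp [Q, mul_add, Finset.sum_add_distrib]

theorem exists_isSymIndependent [Infinite k] {T : TrilinForm k V} (hT : T.IsSymm) (ι : Type*)
    [Fintype ι]
    (h : ((Fintype.card ι ^ 2 + Fintype.card ι : ℕ) : ℕ∞) < qrank k (fun v => T v v v)) :
    ∃ u : ι → V, T.IsSymIndependent u := by
  by_contra! hdep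
  obtain ⟨u, hu⟩ := TrilinForm.exists_span_sup_annihilator_eq_top hT hdep
  obtain ⟨_, hcard⟩ := finrank_quotient_le_card hu
  let E := T.annihilator (T.polarMap u).ker
  refine (qrank_le_finrank T ((T.polarMap u).prod E.mkQ) fun x hx => ?_).not_gt (h.trans_le' ?_)
  · rw [LinearMap.ker_prod, Submodule.ker_mkQ] at hx
    exact hx.2 x hx.1 x hx.1
  · rw [Module.finrank_prod, Module.finrank_fintype_fun_eq_card, Fintype.card_prod, ← sq]
    gcongr

end QRank

section Surjectivity

namespace TrilinForm

variable {k V ι : Type*} [Field k] [AddCommGroup V] [Module k V] [Fintype ι]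

theorem IsSymIndependent.exists_polarMap_eq (h2 : (2 : k) ≠ 0) {T : TrilinForm k V} {u : ι → V}
    (hu : T.IsSymIndependent u) {a : ι × ι → k} (ha : ∀ p, a p.swap = a p) :
    ∃ x, T.polarMap u x = a := by
  classical
  by_contra! hne
  obtain ⟨f, hfa, hf⟩ := Submodule.exists_le_ker_of_notMem
    (p := (T.polarMap u).range) (v := a) (by simpa using hne)
  obtain ⟨c, rfl⟩ := (dotProductEquiv k (ι × ι)).surjective f
  have hc : T.contract u c = 0 := LinearMap.ext fun y =>
    (T.contract_apply u c y).trans (hf ⟨y, rfl⟩)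
  have hanti (p : ι × ι) : c p + c p.swap = 0 := hu c hc p.1 p.2
  refine hfa ((mul_eq_zero.mp (?_ : 2 * c ⬝ᵥ a = 0)).resolve_left h2)
  have hswap : c ⬝ᵥ a = ∑ p : ι × ι, c p.swap * a p :=
    ((Equiv.prodComm ι ι).sum_comp fun p => c p * a p).symm.trans (by simp [ha])
  calc 2 * c ⬝ᵥ a = ∑ p, (c p + c p.swap) * a p := by
        simp_rw [two_mul, add_mul, Finset.sum_add_distrib, ← hswap]
        rfl
    _ = 0 := by simp [hanti]

end TrilinForm

end Surjectivity

section Newton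

namespace TrilinForm

theorem IsSymm.exists_apply_add_smul {R M : Type*} [CommRing R] [AddCommGroup M] [Module R M]
    {T : TrilinForm R M} (hT : T.IsSymm) (a : R) (x y z x' y' z' : M) :
    ∃ r, T (x + a • x') (y + a • y') (z + a • z') =
      T x y z + a * (T y z x' + T x z y' + T x y z') + a ^ 2 * r := by
  refine ⟨T x y' z' + T x' y z' + T x' y' z + a * T x' y' z', ?_⟩
  have hx : T x' y z = T y z x' := (hT.swap_left _ _ _).trans (hT.swap_right _ _ _)
  have hy : T x y' z = T x z y' := hT.swap_right _ _ _
  simp only [map_add, map_smul, LinearMap.add_apply, LinearMap.smul_apply, smul_eq_mul, hx, hy]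
  ring

variable {k V ι : Type*} [Fintype ι] [Field k] [AddCommGroup V] [Module k V] {T : TrilinForm k V}

theorem IsSymIndependent.exists_variation_eq (h2 : (2 : k) ≠ 0) (h3 : (3 : k) ≠ 0) {u : ι → V}
    (hu : T.IsSymIndependent u) {R : ι → ι → ι → k} (hR : Symmetric₃ R) :
    ∃ w : ι → V, ∀ i j l,
      T (u j) (u l) (w i) + T (u i) (u l) (w j) + T (u i) (u j) (w l) = R i j l := by
  choose w hw using fun i =>
    hu.exists_polarMap_eq h2 (a := fun p => R i p.1 p.2 / 3) fun p => by
      simp [hR.swap_right i p.2 p.1]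
  have hTw (i j l : ι) : T (u j) (u l) (w i) = R i j l / 3 := congrFun (hw i) (j, l)
  refine ⟨w, fun i j l => ?_⟩
  rw [hTw, hTw, hTw, hR.swap_left j i l, hR.swap_left l i j, hR.swap_right i l j]
  field_simp
  ring

theorem exists_lift_mod_X_pow_succ (h2 : (2 : k) ≠ 0) (h3 : (3 : k) ≠ 0) (hT : T.IsSymm)
    {u : ι → V} (hu : T.IsSymIndependent u) {G : ι → ι → ι → k[X]} (hG : Symmetric₃ G)
    {γ : ι → k[X] ⊗[k] V} (hγ : ∀ i, evalAt 0 (γ i) = u i) {n : ℕ}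
    (hdvd : ∀ i j l, X ^ (n + 1) ∣ T.baseChange k[X] (γ i) (γ j) (γ l) - G i j l) :
    ∃ δ : ι → k[X] ⊗[k] V, (∀ i, evalAt 0 (δ i) = u i) ∧
      ∀ i j l, X ^ (n + 2) ∣ T.baseChange k[X] (δ i) (δ j) (δ l) - G i j l := by
  choose R hR using hdvd
  have hTk := hT.baseChange k[X]
  have hXn : (X : k[X]) ^ (n + 1) ≠ 0 := pow_ne_zero _ X_ne_zero
  have hR_symm : Symmetric₃ fun i j l => -(R i j l).eval 0 := by
    constructor <;> intro i j l <;> congr 2 <;> apply mul_left_cancel₀ hXn <;> rw [← hR, ← hR]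
    · rw [hTk.swap_left, hG.swap_left]
    · rw [hTk.swap_right, hG.swap_right]
  obtain ⟨w, hw⟩ := hu.exists_variation_eq h2 h3 hR_symm
  refine ⟨fun i => γ i + (X : k[X]) ^ (n + 1) • (1 ⊗ₜ w i), fun i => by simp [hγ], fun i j l => ?_⟩
  obtain ⟨r, hr⟩ := hTk.exists_apply_add_smul (X ^ (n + 1)) (γ i) (γ j) (γ l)
    (1 ⊗ₜ w i) (1 ⊗ₜ w j) (1 ⊗ₜ w l)
  let L := R i j l + (T.baseChange k[X] (γ j) (γ l) (1 ⊗ₜ w i) +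
    T.baseChange k[X] (γ i) (γ l) (1 ⊗ₜ w j) + T.baseChange k[X] (γ i) (γ j) (1 ⊗ₜ w l))
  obtain ⟨q, hq⟩ : X ∣ L := by
    rw [X_dvd_iff, coeff_zero_eq_eval_zero]
    simp [L, eval_baseChange, hγ, hw]
  refine ⟨q + X ^ n * r, ?_⟩
  calc _ = (T.baseChange k[X] (γ i) (γ j) (γ l) - G i j l) + X ^ (n + 1) * (L - R i j l) +
        (X ^ (n + 1)) ^ 2 * r := by rw [hr]; ring
    _ = X ^ (n + 2) * (q + X ^ n * r) := by rw [hR, hq]; ring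

theorem exists_lift_mod_X_pow (h2 : (2 : k) ≠ 0) (h3 : (3 : k) ≠ 0) (hT : T.IsSymm) {u : ι → V}
    (hu : T.IsSymIndependent u) {G : ι → ι → ι → k[X]} (hG : Symmetric₃ G)
    (hG0 : ∀ i j l, (G i j l).eval 0 = T (u i) (u j) (u l)) (n : ℕ) :
    ∃ γ : ι → k[X] ⊗[k] V, (∀ i, evalAt 0 (γ i) = u i) ∧
      ∀ i j l, X ^ (n + 1) ∣ T.baseChange k[X] (γ i) (γ j) (γ l) - G i j l := by
  induction n with
  | zero =>
    refine ⟨fun i => 1 ⊗ₜ u i, by simp, fun i j l => ?_⟩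
    simp [X_dvd_iff, coeff_zero_eq_eval_zero, hG0]
  | succ n ih =>
    obtain ⟨γ, hγ, hdvd⟩ := ih
    exact exists_lift_mod_X_pow_succ h2 h3 hT hu hG hγ hdvd

end TrilinForm

theorem eval_aeval_polynomial {k σ : Type*} [CommRing k] (G : σ → k[X]) (P : MvPolynomial σ k)
    (s : k) : (MvPolynomial.aeval G P).eval s = MvPolynomial.eval (fun q => (G q).eval s) P := by
  rw [← coe_aeval_eq_eval, ← AlgHom.comp_apply, MvPolynomial.comp_aeval,
    ← MvPolynomial.coe_aeval_eq_eval]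
  rfl

theorem dvd_aeval_sub_aeval {k σ A : Type*} [CommRing k] [CommRing A] [Algebra k A] {a : A}
    {F G : σ → A} (h : ∀ q, a ∣ F q - G q) (P : MvPolynomial σ k) :
    a ∣ MvPolynomial.aeval F P - MvPolynomial.aeval G P := by
  let quot := Ideal.Quotient.mkₐ k (Ideal.span {a})
  have dvd_iff (x y : A) : a ∣ x - y ↔ quot x = quot y := by
    rw [← Ideal.mem_span_singleton]
    exact Ideal.Quotient.eq.symm
  have hFG : (fun q => quot (F q)) = fun q => quot (G q) := funext fun q => (dvd_iff _ _).mp (h q)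
  rw [dvd_iff, ← AlgHom.comp_apply, ← AlgHom.comp_apply, MvPolynomial.comp_aeval,
    MvPolynomial.comp_aeval, hFG]

/-- The values `T(v_i, v_j, v_l)` of a trilinear form, packaged as a point of the affine space with
coordinates indexed by `ι × ι × ι`. -/
def TrilinForm.values {R M ι : Type*} [CommRing R] [AddCommGroup M] [Module R M]
    (T : TrilinForm R M) (v : ι → M) : ι × ι × ι → R :=
  fun q => T (v q.1) (v q.2.1) (v q.2.2)

theorem eval_aeval_values {k V ι : Type*} [CommRing k] [AddCommGroup V] [Module k V]
    (T : TrilinForm k V) (γ : ι → k[X] ⊗[k] V) (P : MvPolynomial (ι × ι × ι) k) (s : k) :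
    (MvPolynomial.aeval ((T.baseChange k[X]).values γ) P).eval s =
      MvPolynomial.eval (T.values (TrilinForm.evalAt s ∘ γ)) P := by
  simp only [eval_aeval_polynomial, TrilinForm.values, TrilinForm.eval_baseChange]
  rfl

theorem eval_values_eq_zero_of_isSymIndependent {k V V' ι : Type*} [Fintype ι] [Field k]
    [Infinite k] [AddCommGroup V] [Module k V] [AddCommGroup V'] [Module k V']
    (h2 : (2 : k) ≠ 0) (h3 : (3 : k) ≠ 0) {T : TrilinForm k V} (hT : T.IsSymm) {u : ι → V}
    (hu : T.IsSymIndependent u) {P : MvPolynomial (ι × ι × ι) k}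
    (hP : ∀ v : ι → V, MvPolynomial.eval (T.values v) P = 0) {S : TrilinForm k V'}
    (hS : S.IsSymm) (e : ι → V') : MvPolynomial.eval (S.values e) P = 0 := by
  let G : ι → ι → ι → k[X] := fun i j l =>
    C (T (u i) (u j) (u l)) + X * C (S (e i) (e j) (e l) - T (u i) (u j) (u l))
  have hG : Symmetric₃ G :=
    ⟨fun i j l => by simp only [G, hT.swap_left (u i), hS.swap_left (e i)],
      fun i j l => by simp only [G, hT.swap_right (u i) (u j), hS.swap_right (e i) (e j)]⟩
  let G' : ι × ι × ι → k[X] := fun q => G q.1 q.2.1 q.2.2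
  let Q := MvPolynomial.aeval G' P
  have hQ_dvd (n : ℕ) : X ^ (n + 1) ∣ Q := by
    obtain ⟨γ, -, hγ⟩ := TrilinForm.exists_lift_mod_X_pow h2 h3 hT hu hG (by simp [G]) n
    have hzero : MvPolynomial.aeval ((T.baseChange k[X]).values γ) P = 0 :=
      Polynomial.funext fun s => by rw [eval_aeval_values, hP, eval_zero]
    have hdvd : X ^ (n + 1) ∣ MvPolynomial.aeval ((T.baseChange k[X]).values γ) P - Q :=
      dvd_aeval_sub_aeval (G := G') (fun q => hγ q.1 q.2.1 q.2.2) P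
    rwa [hzero, zero_sub, dvd_neg] at hdvd
  have hQ : Q = 0 := by
    by_contra hne
    simpa using natDegree_le_of_dvd (hQ_dvd Q.natDegree) hne
  have hG1 : (fun q => (G' q).eval 1) = S.values e := funext fun q => by
    simp [G', G, TrilinForm.values]
  rw [← hG1, ← eval_aeval_polynomial, show MvPolynomial.aeval G' P = 0 from hQ, eval_zero]

end Newton

section GLInfinity

variable {k : Type*} [Field k]

theorem exists_linearEquiv_apply_eq {W ι : Type*} [AddCommGroup W] [Module k W]
    [Module.Finite k W] {v u : ι → W} (hv : LinearIndependent k v) (hu : LinearIndependent k u) :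
    ∃ g : W ≃ₗ[k] W, ∀ i, g (v i) = u i := by
  obtain ⟨g, hg⟩ := Submodule.exists_linearEquiv_restrict_eq
    (hv.linearCombinationEquiv.symm ≪≫ₗ hu.linearCombinationEquiv)
  refine ⟨g, fun i => ?_⟩
  have hvi : (hv.linearCombinationEquiv (Finsupp.single i 1) : W) = v i := by simp
  rw [← hvi, ← hg]
  simp

theorem exists_linearEquiv_extend_id {V : Type*} [AddCommGroup V] [Module k V]
    {W W' : Submodule k V} (hW : IsCompl W W') (g : W ≃ₗ[k] W) :
    ∃ g' : V ≃ₗ[k] V, (∀ x : W, g' x = g x) ∧ ∀ x ∈ W', g' x = x := by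
  let e := W.prodEquivOfIsCompl W' hW
  refine ⟨e.symm ≪≫ₗ g.prodCongr (.refl k W') ≪≫ₗ e, fun x => ?_, fun x hx => ?_⟩
  · simp [e]
  · lift x to W' using hx
    simp [e]

theorem map_eq_of_forall_apply_eq {V : Type*} [AddCommGroup V] [Module k V] {W : Submodule k V}
    {g : W ≃ₗ[k] W} {g' : V →ₗ[k] V} (hg' : ∀ x : W, g' x = g x) : W.map g' = W := by
  have hcomp : g' ∘ₗ W.subtype = W.subtype ∘ₗ g.toLinearMap := LinearMap.ext hg'
  calc W.map g' = (g' ∘ₗ W.subtype).range := by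
        rw [LinearMap.range_comp, Submodule.range_subtype]
    _ = W := by
      rw [hcomp, LinearMap.range_comp, LinearEquiv.range, Submodule.map_top,
        Submodule.range_subtype]

theorem exists_linearEquiv_apply_eq_of_isCompl {V ι : Type*} [AddCommGroup V] [Module k V]
    {W W' : Submodule k V} [Module.Finite k W] (hW : IsCompl W W') {v u : ι → V}
    (hv : LinearIndependent k v) (hu : LinearIndependent k u) (hvW : ∀ i, v i ∈ W)
    (huW : ∀ i, u i ∈ W) :
    ∃ g : V ≃ₗ[k] V, (∀ i, g (v i) = u i) ∧ W.map g.toLinearMap = W ∧ ∀ x ∈ W', g x = x := by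
  obtain ⟨g, hg⟩ := exists_linearEquiv_apply_eq (W := W) (v := fun i => ⟨v i, hvW i⟩)
    (u := fun i => ⟨u i, huW i⟩) (.of_comp W.subtype hv) (.of_comp W.subtype hu)
  obtain ⟨g', hg'W, hg'⟩ := exists_linearEquiv_extend_id hW g
  exact ⟨g', fun i => (hg'W ⟨v i, hvW i⟩).trans congr(($(hg i) : V)),
    map_eq_of_forall_apply_eq hg'W, hg'⟩

theorem span_single_lt_eq_supported (N : ℕ) :
    Submodule.span k {v : ℕ →₀ k | ∃ j < N, v = Finsupp.single j (1 : k)} =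
      Finsupp.supported k k (Set.Iio N) := by
  rw [Finsupp.supported_eq_span_single]
  congr 1
  ext v
  simp [eq_comm]

theorem exists_forall_mem_supported_Iio {ι : Type*} [Finite ι] (u : ι → ℕ →₀ k) :
    ∃ N, ∀ i, u i ∈ Finsupp.supported k k (Set.Iio N) := by
  classical
  have := Fintype.ofFinite ι
  obtain ⟨N, hN⟩ := (Finset.univ.biUnion fun i => (u i).support).exists_nat_subset_range
  refine ⟨N, fun i n hn => ?_⟩
  exact Finset.mem_range.mp (hN (Finset.mem_biUnion.mpr ⟨i, Finset.mem_univ i, hn⟩))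

theorem exists_isGLinf_apply_single {d : ℕ} {u : Fin d → ℕ →₀ k} (hu : LinearIndependent k u) :
    ∃ g, IsGLinf g ∧ ∀ i : Fin d, g (Finsupp.single i 1) = u i := by
  have he : LinearIndependent k fun i : Fin d => Finsupp.single (i : ℕ) (1 : k) :=
    (Finsupp.linearIndependent_single_one k ℕ).comp _ Fin.val_injective
  obtain ⟨N, hN⟩ :=
    exists_forall_mem_supported_Iio (Sum.elim (fun i : Fin d => Finsupp.single (i : ℕ) (1 : k)) u)
  have : Module.Finite k (Finsupp.supported k k (Set.Iio N)) := by
    rw [Finsupp.supported_eq_span_single]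
    exact .of_fg (Submodule.fg_span ((Set.finite_Iio N).image _))
  have hcompl : IsCompl (Finsupp.supported k k (Set.Iio N)) (Finsupp.supported k k (Set.Iio N)ᶜ) :=
    ⟨Finsupp.disjoint_supported_supported isCompl_compl.disjoint,
      Finsupp.codisjoint_supported_supported isCompl_compl.codisjoint⟩
  obtain ⟨g, hgu, hgW, hg⟩ := exists_linearEquiv_apply_eq_of_isCompl hcompl he hu
    (fun i => hN (.inl i)) (fun i => hN (.inr i))
  refine ⟨g, ⟨N, fun i hi => hg _ ?_, ?_⟩, hgu⟩
  · exact Finsupp.single_mem_supported k 1 (by simpa using hi)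
  · rwa [span_single_lt_eq_supported]

theorem linearIndependent_add_smul_single {d N : ℕ} {u : Fin d → ℕ →₀ k}
    (hu : ∀ i, u i ∈ Finsupp.supported k k (Set.Iio N)) {s : k} (hs : s ≠ 0) :
    LinearIndependent k fun i : Fin d => u i + s • Finsupp.single (N + i : ℕ) (1 : k) := by
  let coord : (ℕ →₀ k) →ₗ[k] (Fin d → k) := LinearMap.pi fun j => Finsupp.lapply (N + j : ℕ)
  have hu0 (i j : Fin d) : u i (N + j) = 0 :=
    Finsupp.notMem_support_iff.mp fun h => by simpa using hu i h
  refine .of_comp coord ?_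
  have hcoord : (coord ∘ fun i : Fin d => u i + s • Finsupp.single (N + i : ℕ) (1 : k)) =
      (s • (1 : Matrix (Fin d) (Fin d) k)).row := by
    ext i j
    simp [coord, hu0, Finsupp.single_apply, Matrix.one_apply, Fin.val_inj]
  have hdet : (s • (1 : Matrix (Fin d) (Fin d) k)).det ≠ 0 := by simp [hs]
  rw [hcoord]
  exact Matrix.linearIndependent_rows_of_det_ne_zero hdet

theorem eval_values_eq_zero_of_linearIndependent [Infinite k] {T : TrilinForm k (ℕ →₀ k)} {d : ℕ}
    {P : MvPolynomial (Fin d × Fin d × Fin d) k}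
    (hP : ∀ v, LinearIndependent k v → MvPolynomial.eval (T.values v) P = 0)
    (u : Fin d → ℕ →₀ k) : MvPolynomial.eval (T.values u) P = 0 := by
  obtain ⟨N, hN⟩ := exists_forall_mem_supported_Iio u
  let γ : Fin d → k[X] ⊗[k] (ℕ →₀ k) := fun i =>
    1 ⊗ₜ u i + X ⊗ₜ Finsupp.single (N + i : ℕ) 1
  have hγ (s : k) : TrilinForm.evalAt s ∘ γ = fun i => u i + s • Finsupp.single (N + i : ℕ) 1 := by
    ext1 i
    simp only [γ, Function.comp_apply, map_add, TrilinForm.evalAt_tmul, eval_one, eval_X, one_smul]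
  let Q := MvPolynomial.aeval ((T.baseChange k[X]).values γ) P
  have hQ (s : k) : Q.eval s =
      MvPolynomial.eval (T.values fun i => u i + s • Finsupp.single (N + i : ℕ) 1) P := by
    rw [eval_aeval_values, hγ]
  have hXQ : X * Q = 0 := Polynomial.funext fun s => by
    rw [eval_mul, eval_X, eval_zero, mul_eq_zero, or_iff_not_imp_left]
    intro hs
    rw [hQ]
    exact hP _ (linearIndependent_add_smul_single hN hs)
  have hQ0 := hQ 0
  rw [(mul_eq_zero.mp hXQ).resolve_left X_ne_zero, eval_zero] at hQ0
  simpa using hQ0.symm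

end GLInfinity

section Multilinear

/-- The curried form of a multilinear map in three variables. -/
noncomputable def TrilinForm.ofMultilinear {k V : Type*} [CommRing k] [AddCommGroup V] [Module k V]
    (T : MultilinearMap k (fun _ : Fin 3 => V) k) : TrilinForm k V :=
  (MultilinearMap.ofSubsingletonₗ k k V k (0 : Fin 1)).symm.toLinearMap.compRight k ∘ₗ
    (multilinearCurryLeftEquiv k (fun _ : Fin 2 => V) k).toLinearMap ∘ₗ T.curryLeft

theorem TrilinForm.ofMultilinear_apply {k V : Type*} [CommRing k] [AddCommGroup V] [Module k V]
    (T : MultilinearMap k (fun _ : Fin 3 => V) k) (x y z : V) :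
    ofMultilinear T x y z = T ![x, y, z] := by
  suffices h : T (Fin.cons x (Fin.cons y fun _ => z)) = T ![x, y, z] by simpa [ofMultilinear]
  congr 1
  ext1 i
  fin_cases i <;> rfl

variable {k : Type*} [Field k] {T : MultilinearMap k (fun _ : Fin 3 => (ℕ →₀ k)) k}

theorem IsSymTri.ofMultilinear_isSymm (hT : IsSymTri T) : (TrilinForm.ofMultilinear T).IsSymm where
  swap_left x y z := by
    simp only [TrilinForm.ofMultilinear_apply, ← hT (Equiv.swap 0 1) ![x, y, z]]
    congr 1
    ext1 i
    fin_cases i <;> simp [Equiv.swap_apply_of_ne_of_ne]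
  swap_right x y z := by
    simp only [TrilinForm.ofMultilinear_apply, ← hT (Equiv.swap 1 2) ![x, y, z]]
    congr 1
    ext1 i
    fin_cases i <;> simp [Equiv.swap_apply_of_ne_of_ne]

/-- The basis vectors `e_0, …, e_{d-1}` of `ℕ →₀ k`. -/
noncomputable def initialBasis (k : Type*) [Field k] (d : ℕ) (i : Fin d) : ℕ →₀ k :=
  Finsupp.single i 1

theorem exists_coordEval_eq_eval_values (P : MvPolynomial (ℕ × ℕ × ℕ) k) :
    ∃ (d : ℕ) (P' : MvPolynomial (Fin d × Fin d × Fin d) k), ∀ T, coordEval T P =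
      MvPolynomial.eval ((TrilinForm.ofMultilinear T).values (initialBasis k d)) P' := by
  let d := (P.vars.sup fun p => p.1 + p.2.1 + p.2.2) + 1
  have hvars (p : ℕ × ℕ × ℕ) (hp : p ∈ P.vars) : p.1 < d ∧ p.2.1 < d ∧ p.2.2 < d := by
    have := Finset.le_sup (f := fun p : ℕ × ℕ × ℕ => p.1 + p.2.1 + p.2.2) hp
    lia
  let val₃ : Fin d × Fin d × Fin d → ℕ × ℕ × ℕ := Prod.map (↑) (Prod.map (↑) (↑))
  have hval₃ : Function.Injective val₃ :=
    Fin.val_injective.prodMap (Fin.val_injective.prodMap Fin.val_injective)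
  obtain ⟨P', hP'⟩ := MvPolynomial.exists_rename_eq_of_vars_subset_range P val₃ hval₃ fun p hp =>
    have ⟨h₁, h₂, h₃⟩ := hvars p hp
    ⟨(⟨_, h₁⟩, ⟨_, h₂⟩, ⟨_, h₃⟩), rfl⟩
  refine ⟨d, P', fun T => ?_⟩
  rw [← hP', coordEval, MvPolynomial.eval_rename]
  congr 2
  funext q
  exact (TrilinForm.ofMultilinear_apply T _ _ _).symm

theorem values_ofMultilinear_compLinearMap {d : ℕ} {g : (ℕ →₀ k) ≃ₗ[k] (ℕ →₀ k)}
    {v : Fin d → ℕ →₀ k} (hg : ∀ i : Fin d, g (Finsupp.single i 1) = v i) :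
    (TrilinForm.ofMultilinear (T.compLinearMap fun _ => g.toLinearMap)).values (initialBasis k d) =
      (TrilinForm.ofMultilinear T).values v := by
  funext q
  simp only [TrilinForm.values, TrilinForm.ofMultilinear_apply, MultilinearMap.compLinearMap_apply]
  congr 1
  ext1 i
  fin_cases i <;> simp [initialBasis, hg]

end Multilinear

theorem glinf_stable_unbounded_qrank_dense_general {k : Type*} [Field k] [Infinite k]
    (h2 : (2 : k) ≠ 0) (h3 : (3 : k) ≠ 0)
    (Z : Set (MultilinearMap k (fun _ : Fin 3 => (ℕ →₀ k)) k))
    (hsym : ∀ T ∈ Z, IsSymTri T)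
    (hstable : ∀ T ∈ Z, ∀ g : (ℕ →₀ k) ≃ₗ[k] (ℕ →₀ k), IsGLinf g →
      T.compLinearMap (fun _ => g.toLinearMap) ∈ Z)
    (hrank : ∀ m : ℕ, ∃ T ∈ Z, (m : ℕ∞) ≤ qrank k (fun v => T ![v, v, v])) :
    ∀ P : MvPolynomial (ℕ × ℕ × ℕ) k,
      (∀ T ∈ Z, coordEval T P = 0) →
      ∀ T : MultilinearMap k (fun _ : Fin 3 => (ℕ →₀ k)) k, IsSymTri T →
        coordEval T P = 0 := by
  intro P hP S hS
  obtain ⟨d, P', hPP'⟩ := exists_coordEval_eq_eval_values P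
  obtain ⟨T, hTZ, hTrank⟩ := hrank (d ^ 2 + d + 1)
  have hT := (hsym T hTZ).ofMultilinear_isSymm
  simp only [← TrilinForm.ofMultilinear_apply T] at hTrank
  obtain ⟨u, hu⟩ : ∃ u : Fin d → ℕ →₀ k, (TrilinForm.ofMultilinear T).IsSymIndependent u := by
    refine exists_isSymIndependent hT (Fin d) (hTrank.trans_lt' ?_)
    rw [Fintype.card_fin]
    exact_mod_cast Nat.lt_succ_self _
  have hvanish (v : Fin d → ℕ →₀ k) :
      MvPolynomial.eval ((TrilinForm.ofMultilinear T).values v) P' = 0 := by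
    refine eval_values_eq_zero_of_linearIndependent (fun v hv => ?_) v
    obtain ⟨g, hg, hgv⟩ := exists_isGLinf_apply_single hv
    rw [← values_ofMultilinear_compLinearMap hgv, ← hPP']
    exact hP _ (hstable T hTZ g hg)
  rw [hPP']
  exact eval_values_eq_zero_of_isSymIndependent h2 h3 hT hu hvanish
    hS.ofMultilinear_isSymm (initialBasis k d)

/-- Density of `GL∞`-stable sets of unbounded q-rank: a `GL∞`-stable set of symmetric
trilinear forms containing forms of arbitrarily high q-rank is Zariski dense in the
space of all symmetric trilinear forms. -/
theorem glinf_stable_unbounded_qrank_dense {k : Type*} [Field k] [IsAlgClosed k]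
    (h2 : (2 : k) ≠ 0) (h3 : (3 : k) ≠ 0)
    (Z : Set (MultilinearMap k (fun _ : Fin 3 => (ℕ →₀ k)) k))
    (hsym : ∀ T ∈ Z, IsSymTri T)
    (hstable : ∀ T ∈ Z, ∀ g : (ℕ →₀ k) ≃ₗ[k] (ℕ →₀ k), IsGLinf g →
      T.compLinearMap (fun _ => g.toLinearMap) ∈ Z)
    (hrank : ∀ m : ℕ, ∃ T ∈ Z, (m : ℕ∞) ≤ qrank k (fun v => T ![v, v, v])) :
    ∀ P : MvPolynomial (ℕ × ℕ × ℕ) k,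
      (∀ T ∈ Z, coordEval T P = 0) →
      ∀ T : MultilinearMap k (fun _ : Fin 3 => (ℕ →₀ k)) k, IsSymTri T →
        coordEval T P = 0 := by
  have : Infinite k := IsAlgClosed.instInfinite
  exact glinf_stable_unbounded_qrank_dense_general h2 h3 Z hsym hstable hrank
end

section
/- Topological noetherianity of cubic forms (main theorem): let V = ℕ →₀ k with standard basis (e_i), and let GL_∞ be the group of k-linear automorphisms g of V for which there exists N with g(e_i) = e_i for all i ≥ N and g preserving the span of e_0,…,e_{N−1}; GL_∞ acts on symmetric trilinear forms by (g·T) = T∘(g⁻¹ × g⁻¹ × g⁻¹). A coordinate polynomial function is a function on symmetric trilinear forms of the shape T ↦ P((T(e_i,e_j,e_l))_{(i,j,l) ∈ F}) for a finite set F ⊆ ℕ³ and a polynomial P in the variables indexed by F. Suppose Z is a GL_∞-stable set of symmetric trilinear forms on V that is the common zero locus of some (arbitrary) collection of coordinate polynomial functions. Then there exist finitely many coordinate polynomial functions h₁,…,h_m such that Z = { T : h_i(g·T) = 0 for all g ∈ GL_∞ and all 1 ≤ i ≤ m }; i.e. Z is cut out by finitely many GL_∞-orbits of equations. -/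
open scoped BigOperators

/-!
Following Draisma, we consider all finite tuples of symmetric forms at once, in the topology whose
closed sets are the Zariski-closed sets stable under all endomorphisms of `ℕ →₀ k`, and show that
this space is Noetherian by induction on the multiset of degrees.

Let `r` index a form of maximal degree, and let `Y` be a closed set of tuples of the other forms.
By Noetherian induction on `Y` it suffices to treat a proper closed subset `X` of the preimage of
`Y`, on which some equation `F` vanishes that is nontrivial over `Y`. If no coefficient of `F`
other than the constant one survives on `Y`, then `X` lies over a smaller closed set. If all
derivatives of `F` in the coordinates of the `r`-th form vanish over `Y`, then `F` is over `Y` a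
polynomial in the `p`-th powers of these coordinates, and we replace it by one of lower degree.
Otherwise some weighted derivative `h` of `F` is nonzero over `Y`, and has lower degree than `F`,
which takes care of the part of `X` where `h` vanishes on the whole orbit.

Where `h ≠ 0`, pull `z` back along `1 + t • (eᵢ ↦ ℓᵢ v)`. If `F` and `h` involve only
`e₀, …, eₙ₋₁`, the coefficient of `t ^ (d r * p ^ e)` in the resulting identity expresses
`h z * z r (v, …, v) ^ p ^ e` in terms of the other forms and of contractions of `z r` with some of
`e₀, …, eₙ₋₁`. By polarization the closed sets on this part are therefore pulled back from a space
of tuples in which the `r`-th form is replaced by finitely many forms of lower degree.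

Finally, every endomorphism agrees on any finite set of basis vectors with a block matrix `A`, and
`A + t • 1` is invertible for all but finitely many `t`, so equations that hold on the `GL∞`-orbit
of a form hold on its orbit under all endomorphisms.
-/

open Polynomial

/-! ### Symmetric forms -/

/-- Symmetric `d`-linear forms on `V` with values in `W`, encoded as functions of the multiset of
arguments which take the junk value `0` on multisets of cardinality other than `d`. -/
structure SymmForm (k V W : Type*) [CommRing k] [AddCommGroup V] [Module k V] [AddCommGroup W]
    [Module k W] (d : ℕ) where
  toFun : Multiset V → W
  map_of_card_ne' : ∀ s, s.card ≠ d → toFun s = 0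
  map_add_cons' : ∀ x y s, toFun ((x + y) ::ₘ s) = toFun (x ::ₘ s) + toFun (y ::ₘ s)
  map_smul_cons' : ∀ (a : k) x s, toFun ((a • x) ::ₘ s) = a • toFun (x ::ₘ s)

namespace SymmForm

section CommRing

variable {k V V' V'' W : Type*} [CommRing k] [AddCommGroup V] [Module k V] [AddCommGroup V']
  [Module k V'] [AddCommGroup V''] [Module k V''] [AddCommGroup W] [Module k W] {d : ℕ}

instance : CoeFun (SymmForm k V W d) (fun _ => Multiset V → W) := ⟨toFun⟩

@[ext]
theorem ext {T T' : SymmForm k V W d} (h : ∀ s, T s = T' s) : T = T' := by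
  cases T
  cases T'
  congr
  exact funext h

variable (T : SymmForm k V W d)

theorem map_of_card_ne {s : Multiset V} (hs : s.card ≠ d) : T s = 0 := T.map_of_card_ne' s hs

/-- The linear map obtained by fixing all arguments but one. -/
def consLinearMap (s : Multiset V) : V →ₗ[k] W where
  toFun x := T (x ::ₘ s)
  map_add' x y := T.map_add_cons' x y s
  map_smul' a x := T.map_smul_cons' a x s

theorem consLinearMap_apply (s : Multiset V) (x : V) : T.consLinearMap s x = T (x ::ₘ s) := rfl

theorem map_add_smul_cons (x y : V) (t : k) (s : Multiset V) :
    T ((x + t • y) ::ₘ s) = T (x ::ₘ s) + t • T (y ::ₘ s) := by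
  simp only [← consLinearMap_apply, map_add, map_smul]

theorem map_smul_map {α : Type*} (c : α → k) (y : α → V) (m : Multiset α) (s : Multiset V) :
    T (m.map (fun a => c a • y a) + s) = (m.map c).prod • T (m.map y + s) := by
  induction m using Multiset.induction_on generalizing s with
  | empty => simp
  | cons a m ih =>
    have ih' := ih (y a ::ₘ s)
    simp only [Multiset.add_cons] at ih'
    rw [Multiset.map_cons, Multiset.cons_add, ← consLinearMap_apply, map_smul, consLinearMap_apply,
      ih', Multiset.map_cons, Multiset.map_cons, Multiset.prod_cons, Multiset.cons_add, mul_smul]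

/-- The form `s ↦ T (s.map φ)`. -/
def compLinearMap (φ : V' →ₗ[k] V) : SymmForm k V' W d where
  toFun s := T (s.map φ)
  map_of_card_ne' s hs := T.map_of_card_ne (by rwa [Multiset.card_map])
  map_add_cons' x y s := by simp only [Multiset.map_cons, map_add, T.map_add_cons']
  map_smul_cons' a x s := by simp only [Multiset.map_cons, map_smul, T.map_smul_cons']

theorem compLinearMap_apply (φ : V' →ₗ[k] V) (s : Multiset V') :
    T.compLinearMap φ s = T (s.map φ) := rfl

theorem compLinearMap_compLinearMap (φ : V' →ₗ[k] V) (ψ : V'' →ₗ[k] V') :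
    (T.compLinearMap φ).compLinearMap ψ = T.compLinearMap (φ ∘ₗ ψ) :=
  ext fun s => by simp [compLinearMap_apply]

theorem compLinearMap_id : T.compLinearMap LinearMap.id = T :=
  ext fun s => by simp [compLinearMap_apply]

/-- The form obtained by fixing the arguments `u`. -/
def contract {c : ℕ} (u : Multiset V) (hu : u.card + c = d) : SymmForm k V W c where
  toFun s := T (u + s)
  map_of_card_ne' s hs := T.map_of_card_ne (by rw [Multiset.card_add]; omega)
  map_add_cons' x y s := by simp only [Multiset.add_cons, T.map_add_cons']
  map_smul_cons' a x s := by simp only [Multiset.add_cons, T.map_smul_cons']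

theorem mem_of_span_eq_top {κ : Type*} {b : κ → V} (hb : Submodule.span k (Set.range b) = ⊤)
    {S : Submodule k W} {u : Multiset V} (h : ∀ m : Multiset κ, T (u + m.map b) ∈ S)
    (s : Multiset V) : T (u + s) ∈ S := by
  induction s using Multiset.induction_on generalizing u with
  | empty => simpa using h 0
  | cons v s ih =>
    have hle : ⊤ ≤ S.comap (T.consLinearMap (u + s)) := by
      rw [← hb, Submodule.span_le]
      rintro _ ⟨i, rfl⟩
      have hi := ih (u := b i ::ₘ u) fun m => by simpa using h (i ::ₘ m)
      rwa [Multiset.cons_add] at hi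
    simpa [consLinearMap_apply] using hle (Submodule.mem_top (x := v))

/-- The form `s ↦ f (T s)`. -/
def postcomp {W' : Type*} [AddCommGroup W'] [Module k W'] (f : W →ₗ[k] W') :
    SymmForm k V W' d where
  toFun s := f (T s)
  map_of_card_ne' s hs := by rw [T.map_of_card_ne hs, map_zero]
  map_add_cons' x y s := by rw [T.map_add_cons', map_add]
  map_smul_cons' a x s := by rw [T.map_smul_cons', map_smul]

end CommRing

section LinePoly

variable {k V α : Type*} [CommRing k] [AddCommGroup V] [Module k V] {d : ℕ} (T : SymmForm k V k d)

/-- The polynomial `t ↦ T (m.map (x + t • y) + s)` recording the values of a form along a line. -/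
noncomputable def linePoly (x y : α → V) (m : Multiset α) (s : Multiset V) : k[X] :=
  (m.antidiagonal.map fun p => monomial p.2.card (T (p.1.map x + p.2.map y + s))).sum

theorem linePoly_zero (x y : α → V) (s : Multiset V) : T.linePoly x y 0 s = C (T s) := by
  simp [linePoly]

theorem linePoly_cons (x y : α → V) (a : α) (m : Multiset α) (s : Multiset V) :
    T.linePoly x y (a ::ₘ m) s =
      T.linePoly x y m (x a ::ₘ s) + X * T.linePoly x y m (y a ::ₘ s) := by
  simp only [linePoly, Multiset.antidiagonal_cons, Multiset.map_add, Multiset.sum_add,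
    Multiset.map_map, ← Multiset.sum_map_mul_left, X_mul_monomial]
  simp [add_comm]

theorem eval_linePoly (x y : α → V) (m : Multiset α) (s : Multiset V) (t : k) :
    (T.linePoly x y m s).eval t = T (m.map (fun a => x a + t • y a) + s) := by
  induction m using Multiset.induction_on generalizing s with
  | empty => simp [linePoly_zero]
  | cons a m ih =>
    rw [linePoly_cons, Multiset.map_cons, Multiset.cons_add, map_add_smul_cons]
    simp [ih]

theorem coeff_zero_linePoly (x y : α → V) (m : Multiset α) (s : Multiset V) :
    (T.linePoly x y m s).coeff 0 = T (m.map x + s) := by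
  simp [coeff_zero_eq_eval_zero, eval_linePoly]

theorem coeff_one_linePoly_const (v w : V) (a : α) (n : ℕ) (s : Multiset V) :
    (T.linePoly (fun _ => w) (fun _ => v) (Multiset.replicate (n + 1) a) s).coeff 1 =
      (n + 1) * T (v ::ₘ s + Multiset.replicate n w) := by
  induction n generalizing s with
  | zero => simp [Multiset.replicate_succ, linePoly_cons, linePoly_zero, -Multiset.cons_zero]
  | succ n ih =>
    rw [Multiset.replicate_succ, linePoly_cons, coeff_add, ih, coeff_X_mul, coeff_zero_linePoly,
      Multiset.map_replicate]
    simp only [Multiset.replicate_succ, Multiset.add_cons, Multiset.cons_add]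
    rw [Multiset.cons_swap v w, add_comm _ s, Multiset.cons_swap v w]
    push_cast
    ring

end LinePoly

section Polarization

variable {k V W : Type*} [Field k] [Infinite k] [AddCommGroup V] [Module k V] [AddCommGroup W]
  [Module k W] {d : ℕ}

theorem eq_zero_of_diag (hd : (d.factorial : k) ≠ 0) (T : SymmForm k V k d)
    (hT : ∀ w, T (Multiset.replicate d w) = 0) (s : Multiset V) : T s = 0 := by
  suffices ∀ c, s.card + c = d → ∀ w, T (s + Multiset.replicate c w) = 0 by
    by_cases hs : s.card = d
    · simpa using this 0 hs 0
    · exact T.map_of_card_ne hs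
  induction s using Multiset.induction_on with
  | empty =>
    rintro c hc w
    obtain rfl : c = d := by simpa using hc
    simpa using hT w
  | cons v s ih =>
    intro c hc w
    have hline : T.linePoly (fun _ => w) (fun _ => v) (Multiset.replicate (c + 1) ()) s = 0 := by
      refine Polynomial.funext fun t => ?_
      rw [eval_linePoly, Multiset.map_replicate, add_comm, eval_zero]
      exact ih (c + 1) (by rw [← hc, Multiset.card_cons]; omega) _
    have hc0 : (c + 1 : k) ≠ 0 := fun h => hd <| by
      have hdvd : (c + 1) ∣ d.factorial := Nat.dvd_factorial c.succ_pos (by simp at hc; omega)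
      exact zero_dvd_iff.mp (by simpa [h] using Nat.cast_dvd_cast (α := k) hdvd)
    have hcoeff := T.coeff_one_linePoly_const v w () c s
    rw [hline, coeff_zero, eq_comm, mul_eq_zero] at hcoeff
    exact hcoeff.resolve_left hc0

theorem mem_of_diag_mem (hd : (d.factorial : k) ≠ 0) (T : SymmForm k V W d) (S : Submodule k W)
    (hT : ∀ w, T (Multiset.replicate d w) ∈ S) (s : Multiset V) : T s ∈ S := by
  by_contra hs
  obtain ⟨f, hf, hS⟩ := S.exists_le_ker_of_notMem hs
  exact hf ((T.postcomp f).eq_zero_of_diag hd (fun w => hS (hT w)) s)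

end Polarization

end SymmForm

/-! ### Noetherian subspaces -/

section NoetherianSpace

open TopologicalSpace

variable {α β γ : Type*} [TopologicalSpace α] [TopologicalSpace β]

theorem noetherianSpace_of_subset {s t : Set α} (ht : NoetherianSpace t) (hst : s ⊆ t) :
    NoetherianSpace s :=
  (noetherianSpace_set_iff s).2 fun u hu => (noetherianSpace_set_iff t).1 ht u (hu.trans hst)

theorem noetherianSpace_of_subset_union {s t u : Set α} (hs : NoetherianSpace s)
    (ht : NoetherianSpace t) (hu : u ⊆ s ∪ t) : NoetherianSpace u := by
  rw [noetherianSpace_set_iff] at hs ht ⊢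
  intro v hv
  rw [← Set.inter_eq_left.2 (hv.trans hu), Set.inter_union_distrib_left]
  exact (hs _ Set.inter_subset_right).union (ht _ Set.inter_subset_right)

theorem noetherianSpace_of_forall_closed_ssubset {Y : Set α} (hY : IsClosed Y)
    (hproper : ∀ X ⊂ Y, IsClosed X → NoetherianSpace X) : NoetherianSpace Y := by
  rw [noetherianSpace_set_iff]
  intro t htY
  rw [isCompact_iff_ultrafilter_le_nhds']
  intro f htf
  obtain ⟨x, hx⟩ := f.nonempty_of_mem htf
  by_cases hfx : ↑f ≤ nhds x
  · exact ⟨x, hx, hfx⟩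
  obtain ⟨U, ⟨hxU, hU⟩, hUf⟩ : ∃ U, (x ∈ U ∧ IsOpen U) ∧ U ∉ (f : Filter α) := by
    simpa only [(nhds_basis_opens x).ge_iff, not_forall, exists_prop] using hfx
  have hss : Y \ U ⊂ Y := ⟨Set.sdiff_subset, fun h => (h (htY hx)).2 hxU⟩
  have hcompact : IsCompact (t \ U) :=
    (noetherianSpace_set_iff _).1 (hproper _ hss (hY.sdiff hU)) _ (Set.sdiff_subset_sdiff_left htY)
  obtain ⟨y, hy, hfy⟩ := isCompact_iff_ultrafilter_le_nhds'.1 hcompact f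
    (Filter.inter_mem htf (Ultrafilter.compl_mem_iff_notMem.2 hUf))
  exact ⟨y, hy.1, hfy⟩

theorem noetherianSpace_range_of_forall_preimage_eq [NoetherianSpace α] (σ : γ → α) (c : γ → β)
    (h : ∀ Z, IsClosed Z → ∃ W, IsClosed W ∧ σ ⁻¹' W = c ⁻¹' Z) :
    NoetherianSpace (Set.range c) := by
  let _ : TopologicalSpace γ := .induced σ inferInstance
  have : NoetherianSpace γ := (Topology.IsInducing.induced σ).noetherianSpace
  refine NoetherianSpace.range c (continuous_iff_isClosed.2 fun Z hZ => ?_)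
  obtain ⟨W, hW, hWZ⟩ := h Z hZ
  exact isClosed_induced_iff.2 ⟨W, hW, hWZ⟩

end NoetherianSpace

/-! ### Tuples of forms -/

/-- The standard basis vectors of `ℕ →₀ k`. -/
noncomputable abbrev stdVec (k : Type*) [Semiring k] (i : ℕ) : ℕ →₀ k := Finsupp.single i 1

theorem linearCombination_stdVec {k : Type*} [CommRing k] (v : ℕ → ℕ →₀ k) (i : ℕ) :
    Finsupp.linearCombination k v (stdVec k i) = v i := by simp

theorem span_range_stdVec {k : Type*} [CommRing k] :
    Submodule.span k (Set.range (stdVec k)) = ⊤ := by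
  simpa using (Finsupp.basisSingleOne (R := k) (ι := ℕ)).span_eq

theorem linearMap_ext_stdVec {k V : Type*} [CommRing k] [AddCommGroup V] [Module k V]
    {φ ψ : (ℕ →₀ k) →ₗ[k] V} (h : ∀ i, φ (stdVec k i) = ψ (stdVec k i)) : φ = ψ :=
  Finsupp.lhom_ext' fun i => LinearMap.ext_ring (h i)

/-- Tuples of symmetric forms on `ℕ →₀ k`, of degrees `d i`. -/
def FormTuple {ι : Type*} (k : Type*) [Field k] (d : ι → ℕ) : Type _ :=
  ∀ i, SymmForm k (ℕ →₀ k) k (d i)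

namespace FormTuple

variable {k Z ι : Type*} [Field k] {d : ι → ℕ}

/-- The right action of `End (ℕ →₀ k)` on tuples of forms. -/
noncomputable def pullback (z : FormTuple k d) (φ : (ℕ →₀ k) →ₗ[k] (ℕ →₀ k)) : FormTuple k d :=
  fun i => (z i).compLinearMap φ

theorem pullback_apply (z : FormTuple k d) (φ : (ℕ →₀ k) →ₗ[k] (ℕ →₀ k)) (i : ι)
    (s : Multiset (ℕ →₀ k)) : z.pullback φ i s = z i (s.map φ) := rfl

theorem pullback_pullback (z : FormTuple k d) (φ ψ : (ℕ →₀ k) →ₗ[k] (ℕ →₀ k)) :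
    (z.pullback φ).pullback ψ = z.pullback (φ ∘ₗ ψ) :=
  funext fun i => (z i).compLinearMap_compLinearMap φ ψ

theorem pullback_id (z : FormTuple k d) : z.pullback LinearMap.id = z :=
  funext fun i => (z i).compLinearMap_id

/-- Evaluation at `z` of a polynomial in the coordinates `z i (e_{a₁}, …, e_{a_{d i}})`, which are
indexed by `i` and the multiset `{a₁, …, a_{d i}}`. -/
noncomputable def eval (z : FormTuple k d) : MvPolynomial (ι × Multiset ℕ) k →ₐ[k] k :=
  MvPolynomial.aeval fun p => z p.1 (p.2.map (stdVec k))

theorem eval_X (z : FormTuple k d) (p : ι × Multiset ℕ) :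
    z.eval (MvPolynomial.X p) = z p.1 (p.2.map (stdVec k)) :=
  MvPolynomial.aeval_X _ _

/-- The algebra of functions on `Z` that are polynomials in the coordinates of `σ z`. -/
noncomputable def regularFunctions (σ : Z → FormTuple k d) : Subalgebra k (Z → k) :=
  (AlgHom.pi fun z => (σ z).eval).range

theorem mem_regularFunctions {σ : Z → FormTuple k d} {f : Z → k} :
    f ∈ regularFunctions σ ↔ ∃ P, ∀ z, (σ z).eval P = f z := by
  simp [regularFunctions, AlgHom.mem_range, funext_iff]

theorem eval_mem_regularFunctions (σ : Z → FormTuple k d) (P : MvPolynomial (ι × Multiset ℕ) k) :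
    (fun z => (σ z).eval P) ∈ regularFunctions σ :=
  mem_regularFunctions.2 ⟨P, fun _ => rfl⟩

theorem regularFunctions_le {σ : Z → FormTuple k d} {A : Subalgebra k (Z → k)}
    (h : ∀ i (m : Multiset ℕ), (fun z => σ z i (m.map (stdVec k))) ∈ A) :
    regularFunctions σ ≤ A := by
  rintro _ ⟨P, rfl⟩
  induction P using MvPolynomial.induction_on with
  | C a => simp
  | add P Q hP hQ => exact map_add (AlgHom.pi fun z => (σ z).eval) P Q ▸ A.add_mem hP hQ
  | mul_X P p hP =>
    have hX : AlgHom.pi (fun z => (σ z).eval) (MvPolynomial.X p) ∈ A := by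
      convert h p.1 p.2 using 1
      exact funext fun z => eval_X (σ z) p
    exact map_mul (AlgHom.pi fun z => (σ z).eval) P _ ▸ A.mul_mem hP hX

/-- The `i`-th form of `σ z`, as a form whose values are functions of `z`. -/
def coordForm (σ : Z → FormTuple k d) (i : ι) : SymmForm k (ℕ →₀ k) (Z → k) (d i) where
  toFun s z := σ z i s
  map_of_card_ne' _ hs := funext fun z => (σ z i).map_of_card_ne hs
  map_add_cons' x y s := funext fun z => (σ z i).map_add_cons' x y s
  map_smul_cons' a x s := funext fun z => (σ z i).map_smul_cons' a x s

theorem apply_mem_regularFunctions (σ : Z → FormTuple k d) (i : ι) (s : Multiset (ℕ →₀ k)) :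
    (fun z => σ z i s) ∈ regularFunctions σ := by
  rw [← zero_add s]
  refine (coordForm σ i).mem_of_span_eq_top (S := (regularFunctions σ).toSubmodule)
    span_range_stdVec (fun m => ?_) s
  rw [zero_add]
  exact mem_regularFunctions.2 ⟨MvPolynomial.X (i, m), fun z => eval_X _ _⟩

section Topology

open TopologicalSpace

variable {k ι ι' : Type*} [Field k] {d : ι → ℕ}

theorem regularFunctions_pullback_le (φ : (ℕ →₀ k) →ₗ[k] (ℕ →₀ k)) :
    regularFunctions (fun z : FormTuple k d => z.pullback φ) ≤ regularFunctions id :=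
  regularFunctions_le fun i _ => apply_mem_regularFunctions id i _

/-- Zariski-closed sets of tuples of forms that are stable under `End (ℕ →₀ k)`. -/
def IsStableClosed (Z : Set (FormTuple k d)) : Prop :=
  (∀ x : FormTuple k d, (∀ P, (∀ z ∈ Z, z.eval P = 0) → x.eval P = 0) → x ∈ Z) ∧
    ∀ z ∈ Z, ∀ φ, z.pullback φ ∈ Z

theorem IsStableClosed.union {Y Z : Set (FormTuple k d)} (hY : IsStableClosed Y)
    (hZ : IsStableClosed Z) : IsStableClosed (Y ∪ Z) := by
  refine ⟨fun x hx => ?_, fun z hz φ => hz.imp (hY.2 z · φ) (hZ.2 z · φ)⟩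
  by_contra hxYZ
  rw [Set.mem_union, not_or] at hxYZ
  have hxY := mt (hY.1 x) hxYZ.1
  have hxZ := mt (hZ.1 x) hxYZ.2
  push Not at hxY hxZ
  obtain ⟨P, hP, hPx⟩ := hxY
  obtain ⟨Q, hQ, hQx⟩ := hxZ
  refine mul_ne_zero hPx hQx (map_mul x.eval P Q ▸ hx _ ?_)
  rintro z (hz | hz)
  · rw [map_mul, hP z hz, zero_mul]
  · rw [map_mul, hQ z hz, mul_zero]

/-- The topology whose closed sets are the `IsStableClosed` sets, which is coarser than the Zariski
topology. -/
instance : TopologicalSpace (FormTuple k d) := .ofClosed {Z | IsStableClosed Z}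
  ⟨fun x hx => one_ne_zero (map_one x.eval ▸ hx 1 (by simp)), by simp⟩
  (fun S hS => ⟨fun x hx Z hZ => (hS hZ).1 x fun P hP => hx P fun z hz => hP z (hz Z hZ),
    fun z hz φ Z hZ => (hS hZ).2 z (hz Z hZ) φ⟩)
  (fun _ hY _ hZ => hY.union hZ)

theorem isClosed_iff {Z : Set (FormTuple k d)} : IsClosed Z ↔ IsStableClosed Z := by
  rw [← isOpen_compl_iff]
  change IsStableClosed Zᶜᶜ ↔ _
  rw [compl_compl]

theorem pullback_mem {Z : Set (FormTuple k d)} (hZ : IsClosed Z) {z : FormTuple k d} (hz : z ∈ Z)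
    (φ : (ℕ →₀ k) →ₗ[k] (ℕ →₀ k)) : z.pullback φ ∈ Z :=
  (isClosed_iff.1 hZ).2 z hz φ

/-- The tuples `z` such that all of `I` vanishes on the orbit of `z` under `End (ℕ →₀ k)`. -/
def orbitZeroLocus (I : Set (MvPolynomial (ι × Multiset ℕ) k)) : Set (FormTuple k d) :=
  {z | ∀ φ, ∀ P ∈ I, (z.pullback φ).eval P = 0}

theorem eval_eq_zero_of_mem_orbitZeroLocus {I : Set (MvPolynomial (ι × Multiset ℕ) k)}
    {z : FormTuple k d} (hz : z ∈ orbitZeroLocus I) {P : MvPolynomial (ι × Multiset ℕ) k}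
    (hP : P ∈ I) : z.eval P = 0 :=
  z.pullback_id ▸ hz LinearMap.id P hP

theorem isClosed_orbitZeroLocus (I : Set (MvPolynomial (ι × Multiset ℕ) k)) :
    IsClosed (orbitZeroLocus (d := d) I) := by
  refine isClosed_iff.2 ⟨fun x hx φ P hP => ?_, fun z hz φ ψ P hP => ?_⟩
  · obtain ⟨Q, hQ⟩ := mem_regularFunctions.1
      (regularFunctions_pullback_le φ (eval_mem_regularFunctions _ P))
    exact hQ x ▸ hx Q fun z hz => (hQ z).trans (hz φ P hP)
  · exact pullback_pullback z φ ψ ▸ hz _ P hP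

theorem exists_finset_orbitZeroLocus_eq [NoetherianSpace (FormTuple k d)]
    (I : Set (MvPolynomial (ι × Multiset ℕ) k)) :
    ∃ s : Finset (MvPolynomial (ι × Multiset ℕ) k),
      ↑s ⊆ I ∧ orbitZeroLocus (d := d) s = orbitZeroLocus I := by
  obtain ⟨s, hs⟩ := (NoetherianSpace.isCompact (orbitZeroLocus (d := d) I)ᶜ).elim_finite_subcover
    (fun P : I => (orbitZeroLocus {P.1})ᶜ) (fun P => (isClosed_orbitZeroLocus _).isOpen_compl)
    (fun x hx => by
      contrapose! hx
      simp only [Set.mem_iUnion, Set.mem_compl_iff, not_exists, not_not] at hx ⊢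
      exact fun φ P hP => hx ⟨P, hP⟩ φ P rfl)
  have hsI : ↑(s.map (.subtype _)) ⊆ I := fun P hP => by
    obtain ⟨Q, -, rfl⟩ := Finset.mem_map.1 hP
    exact Q.2
  refine ⟨_, hsI, Set.Subset.antisymm (fun x hx => ?_) fun x hx φ P hP => hx φ P (hsI hP)⟩
  by_contra hxI
  obtain ⟨P, hPs, hxP⟩ := Set.mem_iUnion₂.1 (hs hxI)
  refine hxP fun φ Q hQ => hx φ Q ?_
  rw [Set.mem_singleton_iff.1 hQ]
  exact Finset.mem_map_of_mem _ hPs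

/-- The subtuple of a tuple of forms indexed along `e`. -/
def reindex (e : ι' → ι) (z : FormTuple k d) : FormTuple k (d ∘ e) := fun i => z (e i)

theorem continuous_reindex (e : ι' → ι) : Continuous (reindex (k := k) (d := d) e) := by
  refine continuous_iff_isClosed.2 fun Y hY => isClosed_iff.2 ⟨fun x hx => ?_, fun z hz φ =>
    pullback_mem hY hz φ⟩
  refine (isClosed_iff.1 hY).1 _ fun P hP => ?_
  obtain ⟨Q, hQ⟩ := mem_regularFunctions.1 <|
    regularFunctions_le (σ := reindex e) (fun i _ => apply_mem_regularFunctions id (e i) _)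
      (eval_mem_regularFunctions (reindex (k := k) (d := d) e) P)
  exact (hQ x).symm.trans (hx Q fun z hz => (hQ z).trans (hP _ hz))

end Topology

section Locality

variable {k ι : Type*} [Field k] {d : ι → ℕ}

theorem exists_forall_eval_pullback_eq (P : MvPolynomial (ι × Multiset ℕ) k) :
    ∃ n, ∀ (z : FormTuple k d) (φ ψ : (ℕ →₀ k) →ₗ[k] (ℕ →₀ k)),
      (∀ i < n, φ (stdVec k i) = ψ (stdVec k i)) →
        (z.pullback φ).eval P = (z.pullback ψ).eval P := by
  obtain ⟨n, hn⟩ := (P.vars.biUnion fun p => p.2.toFinset).exists_nat_subset_range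
  refine ⟨n, fun z φ ψ h => MvPolynomial.eval₂Hom_congr' rfl (fun p hp _ => ?_) rfl⟩
  rw [pullback_apply, pullback_apply, Multiset.map_map, Multiset.map_map]
  congr 1
  refine Multiset.map_congr rfl fun i hi => h i (Finset.mem_range.1 (hn ?_))
  exact Finset.mem_biUnion.2 ⟨p, hp, Multiset.mem_toFinset.2 hi⟩

end Locality

end FormTuple

/-! ### Shifts -/

section ShiftMap

variable {k : Type*} [CommRing k]

/-- The endomorphism `eᵢ ↦ eᵢ₊ₙ`. -/
noncomputable def shiftMap (k : Type*) [CommRing k] (n : ℕ) : (ℕ →₀ k) →ₗ[k] (ℕ →₀ k) :=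
  Finsupp.linearCombination k fun i => stdVec k (i + n)

theorem shiftMap_stdVec (n i : ℕ) : shiftMap k n (stdVec k i) = stdVec k (i + n) :=
  linearCombination_stdVec _ i

/-- The endomorphism which is `φ` on `e₀, …, eₙ₋₁` and maps `eᵢ₊ₙ` to `ψ eᵢ`. -/
noncomputable def glueMap (n : ℕ) (φ ψ : (ℕ →₀ k) →ₗ[k] (ℕ →₀ k)) : (ℕ →₀ k) →ₗ[k] (ℕ →₀ k) :=
  Finsupp.linearCombination k fun i => if i < n then φ (stdVec k i) else ψ (stdVec k (i - n))

theorem glueMap_stdVec_of_lt {n i : ℕ} (hi : i < n) (φ ψ : (ℕ →₀ k) →ₗ[k] (ℕ →₀ k)) :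
    glueMap n φ ψ (stdVec k i) = φ (stdVec k i) :=
  (linearCombination_stdVec _ i).trans (if_pos hi)

theorem glueMap_comp_shiftMap (n : ℕ) (φ ψ : (ℕ →₀ k) →ₗ[k] (ℕ →₀ k)) :
    glueMap n φ ψ ∘ₗ shiftMap k n = ψ :=
  linearMap_ext_stdVec fun i => by
    rw [LinearMap.comp_apply, shiftMap_stdVec, glueMap, linearCombination_stdVec]
    simp

end ShiftMap

namespace FormTuple

section Shift

variable {k ι : Type*} [Field k] {d : ι → ℕ}

/-- The indices of the forms that describe a tuple of forms `z`, up to the restriction of `z r` to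
the span of the `eᵢ` with `n ≤ i`, by forms on that span: the other `z i`, and the contractions of
all `z i` with nonempty families of vectors among `e₀, …, eₙ₋₁`. -/
abbrev ShiftIndex (d : ι → ℕ) (r : ι) (n : ℕ) : Type _ :=
  {i // i ≠ r} ⊕ (Σ i, Σ j : Fin (d i), Sym (Fin n) (j + 1))

/-- The degrees of the forms indexed by `ShiftIndex d r n`. -/
def shiftDegree (d : ι → ℕ) (r : ι) (n : ℕ) : ShiftIndex d r n → ℕ :=
  Sum.elim (fun i => d i) fun p => d p.1 - (p.2.1 + 1)

/-- The forms indexed by `ShiftIndex d r n`, with the span of the `eᵢ` with `n ≤ i` identified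
with `ℕ →₀ k`. -/
noncomputable def shift (r : ι) (n : ℕ) (z : FormTuple k d) : FormTuple k (shiftDegree d r n)
  | .inl i => (z i).compLinearMap (shiftMap k n)
  | .inr p => ((z p.1).contract ((p.2.2 : Multiset (Fin n)).map fun a : Fin n => stdVec k a)
      (by rw [Multiset.card_map, Sym.card_coe]; exact Nat.add_sub_cancel' p.2.1.2)).compLinearMap
        (shiftMap k n)

theorem shift_pullback (r : ι) (n : ℕ) (z : FormTuple k d) (φ : (ℕ →₀ k) →ₗ[k] (ℕ →₀ k)) :
    (shift r n z).pullback φ =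
      shift r n (z.pullback (glueMap n LinearMap.id (shiftMap k n ∘ₗ φ))) := by
  have hcomp : ∀ s : Multiset (ℕ →₀ k),
      (s.map (shiftMap k n)).map (glueMap n LinearMap.id (shiftMap k n ∘ₗ φ)) =
        (s.map φ).map (shiftMap k n) := fun s => by
    simp only [Multiset.map_map, ← LinearMap.coe_comp, glueMap_comp_shiftMap]
  funext p
  ext s
  rcases p with i | p
  · change z i _ = z i _
    rw [hcomp]
  · change z p.1 _ = z p.1 (Multiset.map _ (_ + _))
    rw [Multiset.map_add, hcomp]
    congr 2
    rw [Multiset.map_map]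
    exact Multiset.map_congr rfl fun a _ =>
      (glueMap_stdVec_of_lt (Fin.is_lt a) LinearMap.id _).symm

theorem apply_stdVec_mem_regularFunctions_shift {r i : ι} {n : ℕ} (u m : Multiset ℕ)
    (hu : ∀ a ∈ u, a < n) (hm : ∀ a ∈ m, n ≤ a) (hir : i ≠ r ∨ u ≠ 0) :
    (fun z : FormTuple k d => z i (u.map (stdVec k) + m.map (stdVec k))) ∈
      regularFunctions (shift r n) := by
  lift m to Multiset (Set.Ici n) using hm
  lift u to Multiset (Fin n) using hu
  have hm' : (m.map Subtype.val).map (stdVec k) =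
      (m.map fun a : Set.Ici n => stdVec k (a - n)).map (shiftMap k n) := by
    simp only [Multiset.map_map]
    refine Multiset.map_congr rfl fun a _ => ?_
    simp only [Function.comp_apply, shiftMap_stdVec, Nat.sub_add_cancel a.2.out]
  rw [hm', Multiset.map_map]
  rcases eq_or_ne u 0 with rfl | hu0
  · have hi : i ≠ r := hir.resolve_right fun h => h rfl
    simp only [Multiset.map_zero, zero_add]
    exact apply_mem_regularFunctions (shift r n) (.inl ⟨i, hi⟩) _
  by_cases hcard : u.card ≤ d i
  · have hpos : u.card - 1 + 1 = u.card := Nat.sub_add_cancel (Multiset.card_pos.2 hu0)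
    exact apply_mem_regularFunctions (shift r n)
      (.inr ⟨i, ⟨u.card - 1, by omega⟩, ⟨u, hpos.symm⟩⟩) _
  · convert (regularFunctions (shift r n)).zero_mem
    refine (SymmForm.map_of_card_ne _ ?_)
    simp only [Multiset.card_add, Multiset.card_map]
    omega

theorem apply_mem_regularFunctions_shift {r i : ι} {n : ℕ} {u : Multiset ℕ} (hu : ∀ a ∈ u, a < n)
    (hir : i ≠ r ∨ u ≠ 0) (s : Multiset (ℕ →₀ k)) :
    (fun z : FormTuple k d => z i (u.map (stdVec k) + s)) ∈ regularFunctions (shift r n) := by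
  refine (coordForm id i).mem_of_span_eq_top (S := (regularFunctions (shift r n)).toSubmodule)
    span_range_stdVec (fun m => ?_) s
  have hsplit : u.map (stdVec k) + m.map (stdVec k) = (u + m.filter (· < n)).map (stdVec k) +
      (m.filter (¬ · < n)).map (stdVec k) := by
    rw [← Multiset.map_add, ← Multiset.map_add, add_assoc, Multiset.filter_add_not]
  rw [hsplit]
  refine apply_stdVec_mem_regularFunctions_shift _ _ (fun a ha => ?_)
    (fun a ha => not_lt.1 (Multiset.mem_filter.1 ha).2) (hir.imp_right fun h h0 => ?_)
  · exact (Multiset.mem_add.1 ha).elim (hu a) fun h => (Multiset.mem_filter.1 h).2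
  · exact h (add_eq_zero.1 h0).1

end Shift

end FormTuple

/-! ### Derivatives of polynomials -/

section MvPolynomial

variable {σ R S : Type*} [CommRing R] [CommRing S]

theorem eval₂_mem_of_vars {Z B : Type*} [SetLike B (Z → S)] [SubsemiringClass B (Z → S)] {b : B}
    {g : Z → R →+* S} {a : Z → σ → S} {F : MvPolynomial σ R} (hg : ∀ c, (fun z => g z c) ∈ b)
    (ha : ∀ i ∈ F.vars, (fun z => a z i) ∈ b) : (fun z => F.eval₂ (g z) (a z)) ∈ b := by
  have heq : (fun z => F.eval₂ (g z) (a z)) = ∑ s ∈ F.support,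
      (fun z => g z (F.coeff s)) * ∏ i ∈ s.support, (fun z => a z i) ^ s i := by
    funext z
    simp [MvPolynomial.eval₂_eq]
  rw [heq]
  refine sum_mem fun s hs => mul_mem (hg _) (prod_mem fun i hi => pow_mem (ha i ?_) _)
  exact (MvPolynomial.mem_vars_iff_mem_support i).2 ⟨s, hs, hi⟩

/-- The derivative in the direction of a vector `c` of constants. -/
noncomputable def directionalDeriv (c : σ → R) :
    Derivation R (MvPolynomial σ R) (MvPolynomial σ R) :=
  MvPolynomial.mkDerivation R fun i => MvPolynomial.C (c i)

theorem directionalDeriv_eq_sum (c : σ → R) (F : MvPolynomial σ R) :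
    directionalDeriv c F = ∑ i ∈ F.vars, MvPolynomial.C (c i) * MvPolynomial.pderiv i F := by
  classical
  have hsum : directionalDeriv c F =
      (∑ i ∈ F.vars, (MvPolynomial.C (c i) : MvPolynomial σ R) •
        (MvPolynomial.pderiv i : Derivation R _ _)) F := by
    refine MvPolynomial.derivation_eq_of_forall_mem_vars fun i hi => ?_
    rw [directionalDeriv, MvPolynomial.mkDerivation_X, ← Derivation.coeFnAddMonoidHom_apply,
      map_sum, Finset.sum_apply, Finset.sum_eq_single_of_mem i hi]
    · simp
    · intro j _ hji
      simp [MvPolynomial.pderiv_X_of_ne hji.symm]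
  rw [hsum, ← Derivation.coeFnAddMonoidHom_apply, map_sum, Finset.sum_apply]
  simp

theorem map_directionalDeriv (g : R →+* S) (c : σ → R) (F : MvPolynomial σ R) :
    MvPolynomial.map g (directionalDeriv c F) =
      directionalDeriv (fun i => g (c i)) (MvPolynomial.map g F) := by
  induction F using MvPolynomial.induction_on with
  | C a => simp [directionalDeriv]
  | add F G hF hG => simp only [map_add, hF, hG]
  | mul_X F i hF =>
    rw [Derivation.leibniz, map_mul (MvPolynomial.map g), Derivation.leibniz, map_add]
    simp only [smul_eq_mul, map_mul, hF, MvPolynomial.map_X]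
    simp [directionalDeriv]

theorem totalDegree_directionalDeriv_lt (c : σ → R) {F : MvPolynomial σ R}
    (hF : F.totalDegree ≠ 0) : (directionalDeriv c F).totalDegree < F.totalDegree := by
  refine (Finset.sup_lt_iff (Nat.pos_of_ne_zero hF)).2 fun s hs => ?_
  rw [MvPolynomial.mem_support_iff, directionalDeriv_eq_sum, MvPolynomial.coeff_sum] at hs
  obtain ⟨i, -, hi⟩ := Finset.exists_ne_zero_of_sum_ne_zero hs
  rw [MvPolynomial.coeff_C_mul, MvPolynomial.coeff_pderiv] at hi
  have hle := MvPolynomial.le_totalDegree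
    (MvPolynomial.mem_support_iff.2 (left_ne_zero_of_mul (right_ne_zero_of_mul hi)))
  rw [Finsupp.sum_add_index' (fun _ => rfl) (fun _ _ _ => rfl), Finsupp.sum_single_index rfl] at hle
  exact hle

theorem exists_eval₂_add_mul_eq (g : R →+* S) (a : σ → S) (c : σ → R) (t : S)
    (F : MvPolynomial σ R) : ∃ E, F.eval₂ g (fun i => a i + t * g (c i)) =
      F.eval₂ g a + t * (directionalDeriv c F).eval₂ g a + t ^ 2 * E := by
  induction F using MvPolynomial.induction_on with
  | C x => exact ⟨0, by simp [directionalDeriv]⟩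
  | add F G hF hG =>
    obtain ⟨E, hE⟩ := hF
    obtain ⟨E', hE'⟩ := hG
    refine ⟨E + E', ?_⟩
    rw [map_add]
    simp only [MvPolynomial.eval₂_add, hE, hE']
    ring
  | mul_X F i hF =>
    obtain ⟨E, hE⟩ := hF
    refine ⟨(directionalDeriv c F).eval₂ g a * g (c i) + E * (a i + t * g (c i)), ?_⟩
    rw [Derivation.leibniz]
    simp only [directionalDeriv, MvPolynomial.mkDerivation_X, smul_eq_mul, MvPolynomial.eval₂_add,
      MvPolynomial.eval₂_mul, MvPolynomial.eval₂_X, MvPolynomial.eval₂_C] at hE ⊢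
    rw [hE]
    ring

theorem exists_coeff_eq_coeff_nsmul {p : ℕ} (hp : p ≠ 0) (F : MvPolynomial σ R) :
    ∃ G : MvPolynomial σ R, ∀ s, G.coeff s = F.coeff (p • s) :=
  ⟨AddMonoidAlgebra.comapDomain (p • ·) (nsmul_right_injective hp) F, fun _ => rfl⟩

theorem exists_sum_mul_prod_map_pow_ne_zero {k : Type*} [Field k] [Infinite k] {d q : ℕ}
    (hq : q ≠ 0) {s : Finset (Sym ℕ d)} {b : Sym ℕ d → k} {m₀ : Sym ℕ d} (hm₀ : m₀ ∈ s)
    (hb : b m₀ ≠ 0) :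
    ∃ ℓ : ℕ → k, ∑ m ∈ s, ((m : Multiset ℕ).map ℓ).prod ^ q * b m ≠ 0 := by
  classical
  let G : MvPolynomial ℕ k :=
    ∑ m ∈ s, MvPolynomial.monomial (q • Multiset.toFinsupp (m : Multiset ℕ)) (b m)
  have hinj : Function.Injective fun m : Sym ℕ d => q • Multiset.toFinsupp (m : Multiset ℕ) :=
    (nsmul_right_injective hq).comp (Multiset.toFinsupp.injective.comp Sym.coe_injective)
  have hG : G ≠ 0 := fun h0 => hb <| by
    have hcoeff : G.coeff (q • Multiset.toFinsupp (m₀ : Multiset ℕ)) = b m₀ := by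
      simp only [G, MvPolynomial.coeff_sum, MvPolynomial.coeff_monomial, hinj.eq_iff]
      simp [hm₀]
    rw [← hcoeff, h0, MvPolynomial.coeff_zero]
  obtain ⟨ℓ, hℓ⟩ : ∃ ℓ, MvPolynomial.eval ℓ G ≠ 0 := by
    by_contra! h
    exact hG (MvPolynomial.funext fun ℓ => (h ℓ).trans (map_zero _).symm)
  refine ⟨ℓ, ?_⟩
  convert hℓ using 1
  simp only [G, map_sum, MvPolynomial.eval_monomial]
  refine Finset.sum_congr rfl fun m _ => ?_
  rw [Finsupp.prod, Finsupp.support_smul_eq hq, Multiset.toFinsupp_support,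
    Finset.prod_multiset_map_count, ← Finset.prod_pow, mul_comm]
  simp only [Finsupp.smul_apply, smul_eq_mul, Multiset.toFinsupp_apply, pow_mul']

end MvPolynomial

/-! ### Equations along a line -/

section PolyFamilies

variable {k Z : Type*} [CommRing k]

/-- The families of polynomials whose coefficients, as functions of the parameter, lie in `A`. -/
def polyFamilies (A : Subalgebra k (Z → k)) : Subalgebra k (Z → k[X]) where
  carrier := {f | ∀ j, (fun z => (f z).coeff j) ∈ A}
  mul_mem' {f g} hf hg j := by
    have heq : (fun z => ((f * g) z).coeff j) = ∑ p ∈ Finset.HasAntidiagonal.antidiagonal j,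
        (fun z => (f z).coeff p.1) * fun z => (g z).coeff p.2 := by
      funext z
      simp [coeff_mul]
    exact heq ▸ A.sum_mem fun p _ => A.mul_mem (hf p.1) (hg p.2)
  add_mem' hf hg j := by simpa only [Pi.add_apply, coeff_add] using! A.add_mem (hf j) (hg j)
  algebraMap_mem' a j := by
    simp only [Pi.algebraMap_apply, algebraMap_eq, coeff_C]
    split_ifs
    · exact A.algebraMap_mem a
    · exact A.zero_mem

theorem C_mem_polyFamilies {A : Subalgebra k (Z → k)} {f : Z → k} (hf : f ∈ A) :
    (fun z => C (f z)) ∈ polyFamilies A := fun j => by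
  simp only [coeff_C]
  split_ifs
  · exact hf
  · exact A.zero_mem

theorem X_mem_polyFamilies (A : Subalgebra k (Z → k)) : (fun _ => X) ∈ polyFamilies A := fun j => by
  simp only [coeff_X]
  split_ifs
  · exact A.one_mem
  · exact A.zero_mem

variable {V α : Type*} [AddCommGroup V] [Module k V] {d : ℕ} {T : Z → SymmForm k V k d}
  {A : Subalgebra k (Z → k)}

theorem linePoly_mem_polyFamilies (x y : α → V) (m : Multiset α) {s : Multiset V}
    (h : ∀ s', (fun z => T z (s + s')) ∈ A) :
    (fun z => (T z).linePoly x y m s) ∈ polyFamilies A := by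
  induction m using Multiset.induction_on generalizing s with
  | empty =>
    simp only [SymmForm.linePoly_zero]
    exact C_mem_polyFamilies (by simpa using h 0)
  | cons a m ih =>
    have hcons : ∀ v s', (fun z => T z (v ::ₘ s + s')) ∈ A := fun v s' => by
      simpa only [Multiset.cons_add, Multiset.add_cons] using h (v ::ₘ s')
    simp only [SymmForm.linePoly_cons]
    exact add_mem (ih (hcons _)) (mul_mem (X_mem_polyFamilies A) (ih (hcons _)))

theorem linePoly_sub_monomial_mem_polyFamilies (x y : α → V) {m : Multiset α}
    (h : ∀ a ∈ m, ∀ s', (fun z => T z (x a ::ₘ s')) ∈ A) (s : Multiset V) :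
    (fun z => (T z).linePoly x y m s - monomial m.card (T z (m.map y + s))) ∈ polyFamilies A := by
  induction m using Multiset.induction_on generalizing s with
  | empty =>
    simp only [SymmForm.linePoly_zero, Multiset.card_zero, monomial_zero_left, Multiset.map_zero,
      zero_add, sub_self]
    exact zero_mem _
  | cons a m ih =>
    have heq : ∀ z, (T z).linePoly x y (a ::ₘ m) s -
        monomial (a ::ₘ m).card (T z ((a ::ₘ m).map y + s)) = (T z).linePoly x y m (x a ::ₘ s) +
          X * ((T z).linePoly x y m (y a ::ₘ s) - monomial m.card (T z (m.map y + y a ::ₘ s))) := by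
      intro z
      rw [SymmForm.linePoly_cons, mul_sub, X_mul_monomial, Multiset.card_cons, Multiset.map_cons,
        Multiset.add_cons, Multiset.cons_add, add_sub_assoc]
    simp only [heq]
    refine add_mem (linePoly_mem_polyFamilies x y m fun s' => ?_)
      (mul_mem (X_mem_polyFamilies A) (ih (fun b hb => h b (Multiset.mem_cons_of_mem hb)) _))
    simpa only [Multiset.cons_add] using h a (Multiset.mem_cons_self a m) (s + s')

end PolyFamilies

theorem eval_zero_mul_eq_neg_coeff {k : Type*} [CommRing k] {P Q E : k[X]} {a : k} {N : ℕ}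
    (hN : N ≠ 0) (h : P + X ^ N * C a * Q + (X ^ N * C a) ^ 2 * E = 0) :
    Q.eval 0 * a = -P.coeff N := by
  have hrw : P + X ^ N * (C a * Q) + X ^ (N + N) * (C a ^ 2 * E) = 0 := by rw [← h]; ring
  have hcoeff := congrArg (coeff · N) hrw
  simp only [coeff_add, coeff_X_pow_mul', le_refl, if_true, Nat.sub_self, coeff_C_mul, coeff_zero,
    if_neg (show ¬ N + N ≤ N by omega), add_zero, coeff_zero_eq_eval_zero Q] at hcoeff
  linear_combination hcoeff

/-- The endomorphism `eᵢ ↦ ℓᵢ v`. -/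
noncomputable def rankOneMap {k : Type*} [CommRing k] (ℓ : ℕ → k) (v : ℕ →₀ k) :
    (ℕ →₀ k) →ₗ[k] (ℕ →₀ k) :=
  Finsupp.linearCombination k fun i => ℓ i • v

theorem rankOneMap_stdVec {k : Type*} [CommRing k] (ℓ : ℕ → k) (v : ℕ →₀ k) (i : ℕ) :
    rankOneMap ℓ v (stdVec k i) = ℓ i • v :=
  linearCombination_stdVec _ i

namespace FormTuple

section Line

variable {k ι : Type*} [Field k] {d : ι → ℕ}

/-- The values of polynomials along the line of tuples of forms `t ↦ z.pullback (φ + t • ψ)`. -/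
noncomputable def lineHom (z : FormTuple k d) (φ ψ : (ℕ →₀ k) →ₗ[k] (ℕ →₀ k)) :
    MvPolynomial (ι × Multiset ℕ) k →ₐ[k] k[X] :=
  MvPolynomial.aeval fun p =>
    (z p.1).linePoly (fun i => φ (stdVec k i)) (fun i => ψ (stdVec k i)) p.2 0

theorem eval_lineHom (z : FormTuple k d) (φ ψ : (ℕ →₀ k) →ₗ[k] (ℕ →₀ k)) (t : k)
    (P : MvPolynomial (ι × Multiset ℕ) k) :
    (z.lineHom φ ψ P).eval t = (z.pullback (φ + t • ψ)).eval P := by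
  have hcomp : (Polynomial.aeval t).comp (z.lineHom φ ψ) = (z.pullback (φ + t • ψ)).eval := by
    refine MvPolynomial.algHom_ext fun p => ?_
    rw [AlgHom.comp_apply, lineHom, MvPolynomial.aeval_X, coe_aeval_eq_eval,
      SymmForm.eval_linePoly, eval_X, pullback_apply, Multiset.map_map, add_zero]
    rfl
  rw [← hcomp, AlgHom.comp_apply, coe_aeval_eq_eval]

theorem lineHom_mem_polyFamilies {Z : Type*} {σ : Z → FormTuple k d} {A : Subalgebra k (Z → k)}
    (hA : ∀ i s, (fun z => σ z i s) ∈ A) {φ ψ : (ℕ →₀ k) →ₗ[k] (ℕ →₀ k)}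
    (P : MvPolynomial (ι × Multiset ℕ) k) : (fun z => (σ z).lineHom φ ψ P) ∈ polyFamilies A := by
  simp only [lineHom, MvPolynomial.aeval_def]
  exact eval₂_mem_of_vars (fun a => (polyFamilies A).algebraMap_mem a)
    fun p _ => linePoly_mem_polyFamilies _ _ _ fun s => hA p.1 _

end Line

section RelPoly

variable {k ι : Type*} [Field k] {d : ι → ℕ} {r : ι}

/-- Polynomials in the coordinates of the `r`-th form of a tuple, whose coefficients are polynomials
in the coordinates of the other forms. -/
abbrev RelPoly (k : Type*) [Field k] (d : ι → ℕ) (r : ι) : Type _ :=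
  MvPolynomial (Sym ℕ (d r)) (MvPolynomial ({i // i ≠ r} × Multiset ℕ) k)

/-- The tuple obtained by omitting the `r`-th form. -/
abbrev dropForm (r : ι) (z : FormTuple k d) : FormTuple k (d ∘ (Subtype.val : {i // i ≠ r} → ι)) :=
  reindex Subtype.val z

/-- The value of a relative polynomial on the `q`-th powers of the coordinates of `z r`. -/
noncomputable def relEval (q : ℕ) (z : FormTuple k d) : RelPoly k d r →+* k :=
  MvPolynomial.eval₂Hom ((dropForm r z).eval : _ →+* k)
    fun m => z r ((m : Multiset ℕ).map (stdVec k)) ^ q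

theorem relEval_mem (q : ℕ) {F : RelPoly k d r} {A : Subalgebra k (FormTuple k d → k)}
    (hA : ∀ i ≠ r, ∀ s, (fun z : FormTuple k d => z i s) ∈ A)
    (hF : ∀ m ∈ F.vars, (fun z : FormTuple k d => z r ((m : Multiset ℕ).map (stdVec k))) ∈ A) :
    (fun z : FormTuple k d => relEval q z F) ∈ A := by
  simp only [relEval, MvPolynomial.coe_eval₂Hom]
  refine eval₂_mem_of_vars (fun c => ?_) fun m hm => A.pow_mem (hF m hm) q
  exact regularFunctions_le (σ := dropForm r) (fun i _ => hA i i.2 _)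
    (eval_mem_regularFunctions _ c)

/-- The derivative `∑ ℓ(m) ^ q ∂/∂xₘ`, where `ℓ(m)` is the product of the `ℓᵢ` over `i ∈ m`. -/
noncomputable def weightDeriv (q : ℕ) (ℓ : ℕ → k) :
    Derivation (MvPolynomial ({i // i ≠ r} × Multiset ℕ) k) (RelPoly k d r) (RelPoly k d r) :=
  directionalDeriv fun m => MvPolynomial.C (((m : Multiset ℕ).map ℓ).prod ^ q)

/-- The polynomial `t ↦ z r (e_{m₁} + t ℓ_{m₁} v, …)` without its leading term
`ℓ(m) z r (v, …, v) t ^ d r`. -/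
noncomputable def lowerLine (z : FormTuple k d) (ℓ : ℕ → k) (v : ℕ →₀ k) (m : Sym ℕ (d r)) : k[X] :=
  (z r).linePoly (stdVec k) (fun i => ℓ i • v) m 0 -
    monomial (m : Multiset ℕ).card (z r ((m : Multiset ℕ).map (fun i => ℓ i • v) + 0))

theorem linePoly_eq_lowerLine_add (z : FormTuple k d) (ℓ : ℕ → k) (v : ℕ →₀ k)
    (m : Sym ℕ (d r)) : (z r).linePoly (stdVec k) (fun i => ℓ i • v) m 0 = lowerLine z ℓ v m +
      X ^ d r * C (z r (Multiset.replicate (d r) v)) * C ((m : Multiset ℕ).map ℓ).prod := by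
  rw [lowerLine, SymmForm.map_smul_map, Sym.card_coe, add_zero, Multiset.map_const', Sym.card_coe,
    ← C_mul_X_pow_eq_monomial, smul_eq_mul, C_mul]
  ring

theorem eval_zero_lowerLine (hr : d r ≠ 0) (z : FormTuple k d) (ℓ : ℕ → k) (v : ℕ →₀ k)
    (m : Sym ℕ (d r)) :
    (lowerLine z ℓ v m).eval 0 = z r ((m : Multiset ℕ).map (stdVec k)) := by
  have h := congrArg (Polynomial.eval 0) (linePoly_eq_lowerLine_add z ℓ v m)
  simpa [SymmForm.eval_linePoly, hr] using h.symm

/-- The coefficients of relative polynomials along the line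
`t ↦ z.pullback (1 + t • rankOneMap ℓ v)`. -/
noncomputable abbrev relLineHom (r : ι) (z : FormTuple k d) (ℓ : ℕ → k) (v : ℕ →₀ k) :
    MvPolynomial ({i // i ≠ r} × Multiset ℕ) k →+* k[X] :=
  ((dropForm r z).lineHom LinearMap.id (rankOneMap ℓ v) : _ →+* k[X])

theorem eval_eval₂_relLineHom (z : FormTuple k d) (ℓ : ℕ → k) (v : ℕ →₀ k) (F : RelPoly k d r)
    (a : Sym ℕ (d r) → k[X]) (t : k) : (F.eval₂ (relLineHom r z ℓ v) a).eval t =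
      F.eval₂ ((dropForm r (z.pullback (LinearMap.id + t • rankOneMap ℓ v))).eval : _ →+* k)
        fun m => (a m).eval t := by
  rw [← coe_evalRingHom, MvPolynomial.hom_eval₂]
  congr 1
  exact RingHom.ext fun P => eval_lineHom (dropForm r z) _ _ t P

theorem eval_eval₂_linePoly (q : ℕ) (z : FormTuple k d) (ℓ : ℕ → k) (v : ℕ →₀ k)
    (F : RelPoly k d r) (t : k) :
    (F.eval₂ (relLineHom r z ℓ v) fun m : Sym ℕ (d r) =>
        (z r).linePoly (stdVec k) (fun i => ℓ i • v) m 0 ^ q).eval t =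
      relEval q (z.pullback (LinearMap.id + t • rankOneMap ℓ v)) F := by
  rw [eval_eval₂_relLineHom, relEval, MvPolynomial.coe_eval₂Hom]
  congr 1
  funext m
  rw [eval_pow, SymmForm.eval_linePoly, pullback_apply, Multiset.map_map, add_zero]
  simp [rankOneMap_stdVec]

theorem eval_zero_eval₂_lowerLine (hr : d r ≠ 0) (q : ℕ) (z : FormTuple k d) (ℓ : ℕ → k)
    (v : ℕ →₀ k) (F : RelPoly k d r) :
    (F.eval₂ (relLineHom r z ℓ v) fun m => lowerLine z ℓ v m ^ q).eval 0 = relEval q z F := by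
  rw [eval_eval₂_relLineHom, zero_smul, add_zero, pullback_id]
  simp only [eval_pow, eval_zero_lowerLine hr]
  rfl

theorem relLineHom_C (z : FormTuple k d) (ℓ : ℕ → k) (v : ℕ →₀ k) (a : k) :
    relLineHom r z ℓ v (MvPolynomial.C a) = C a :=
  ((dropForm r z).lineHom LinearMap.id (rankOneMap ℓ v)).commutes a

variable {p : ℕ} [ExpChar k p]

theorem exists_eval₂_linePoly_eq (e : ℕ) (z : FormTuple k d) (ℓ : ℕ → k) (v : ℕ →₀ k)
    (F : RelPoly k d r) : ∃ E, (F.eval₂ (relLineHom r z ℓ v) fun m : Sym ℕ (d r) =>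
        (z r).linePoly (stdVec k) (fun i => ℓ i • v) m 0 ^ p ^ e) =
      (F.eval₂ (relLineHom r z ℓ v) fun m => lowerLine z ℓ v m ^ p ^ e) +
      X ^ (d r * p ^ e) * C (z r (Multiset.replicate (d r) v) ^ p ^ e) *
        (weightDeriv (p ^ e) ℓ F).eval₂ (relLineHom r z ℓ v) (fun m => lowerLine z ℓ v m ^ p ^ e) +
      (X ^ (d r * p ^ e) * C (z r (Multiset.replicate (d r) v) ^ p ^ e)) ^ 2 * E := by
  have hfrobenius : ∀ m : Sym ℕ (d r), (z r).linePoly (stdVec k) (fun i => ℓ i • v) m 0 ^ p ^ e =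
      lowerLine z ℓ v m ^ p ^ e +
        X ^ (d r * p ^ e) * C (z r (Multiset.replicate (d r) v) ^ p ^ e) *
          relLineHom r z ℓ v (MvPolynomial.C (((m : Multiset ℕ).map ℓ).prod ^ p ^ e)) := fun m => by
    rw [linePoly_eq_lowerLine_add, add_pow_expChar_pow, mul_pow, mul_pow, ← pow_mul, ← C_pow,
      ← C_pow, relLineHom_C]
  simp only [hfrobenius]
  exact exists_eval₂_add_mul_eq _ _ _ _ F

theorem relEval_weightDeriv_mul_eq [Infinite k] (hr : d r ≠ 0) (e : ℕ) (z : FormTuple k d)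
    (ℓ : ℕ → k) (v : ℕ →₀ k) {F : RelPoly k d r}
    (hF : ∀ φ, relEval (p ^ e) (z.pullback φ) F = 0) :
    relEval (p ^ e) z (weightDeriv (p ^ e) ℓ F) * z r (Multiset.replicate (d r) v) ^ p ^ e =
      -(F.eval₂ (relLineHom r z ℓ v) fun m => lowerLine z ℓ v m ^ p ^ e).coeff (d r * p ^ e) := by
  have hzero : (F.eval₂ (relLineHom r z ℓ v) fun m : Sym ℕ (d r) =>
      (z r).linePoly (stdVec k) (fun i => ℓ i • v) m 0 ^ p ^ e) = 0 :=
    Polynomial.funext fun t => by rw [eval_eval₂_linePoly, hF, eval_zero]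
  obtain ⟨E, hE⟩ := exists_eval₂_linePoly_eq (p := p) e z ℓ v F
  rw [hzero] at hE
  rw [← eval_zero_eval₂_lowerLine hr (p ^ e) z ℓ v]
  exact eval_zero_mul_eq_neg_coeff (mul_ne_zero hr (pow_ne_zero e (expChar_ne_zero k p))) hE.symm

theorem exists_mem_eq_relEval_weightDeriv_mul [Infinite k] (hr : d r ≠ 0) (e : ℕ)
    (ℓ : ℕ → k) (v : ℕ →₀ k) {F : RelPoly k d r} {A : Subalgebra k (FormTuple k d → k)}
    (hA : ∀ i ≠ r, ∀ s, (fun z : FormTuple k d => z i s) ∈ A)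
    (hFA : ∀ m ∈ F.vars, ∀ a ∈ m, ∀ s, (fun z : FormTuple k d => z r (stdVec k a ::ₘ s)) ∈ A) :
    ∃ f ∈ A, ∀ z, (∀ φ, relEval (p ^ e) (z.pullback φ) F = 0) →
      f z = relEval (p ^ e) z (weightDeriv (p ^ e) ℓ F) *
        z r (Multiset.replicate (d r) v) ^ p ^ e := by
  have hcoeffs : ∀ c, (fun z => relLineHom r z ℓ v c) ∈ polyFamilies A := fun c =>
    lineHom_mem_polyFamilies (σ := dropForm r) (fun i s => hA i i.2 s) c
  have hvars : ∀ m ∈ F.vars, (fun z => lowerLine z ℓ v m ^ p ^ e) ∈ polyFamilies A := fun m hm =>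
    pow_mem (linePoly_sub_monomial_mem_polyFamilies _ _ (hFA m hm) 0) _
  exact ⟨_, A.neg_mem (eval₂_mem_of_vars (a := fun z m => lowerLine z ℓ v m ^ p ^ e) hcoeffs hvars
    (d r * p ^ e)), fun z hz => (relEval_weightDeriv_mul_eq hr e z ℓ v hz).symm⟩

end RelPoly

end FormTuple

/-! ### The locus where a derivative is nonzero -/

section PowerLocalization

variable {k Z : Type*} [Field k] {p : ℕ} [ExpChar k p]

/-- The functions whose `p ^ e`-th power agrees on `X` with a quotient `f / h ^ N` for some `f ∈ A`,
where `p` is the characteristic exponent. -/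
def powerLocalization (p : ℕ) [ExpChar k p] (e : ℕ) {A : Subalgebra k (Z → k)} {h : Z → k}
    (hh : h ∈ A) (X : Set Z) : Subalgebra k (Z → k) where
  carrier := {g | ∃ N, ∃ f ∈ A, ∀ z ∈ X, f z = h z ^ N * g z ^ p ^ e}
  mul_mem' := by
    rintro g₁ g₂ ⟨N₁, f₁, hf₁, h₁⟩ ⟨N₂, f₂, hf₂, h₂⟩
    refine ⟨N₁ + N₂, f₁ * f₂, A.mul_mem hf₁ hf₂, fun z hz => ?_⟩
    rw [Pi.mul_apply, Pi.mul_apply, h₁ z hz, h₂ z hz]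
    ring
  add_mem' := by
    rintro g₁ g₂ ⟨N₁, f₁, hf₁, h₁⟩ ⟨N₂, f₂, hf₂, h₂⟩
    refine ⟨N₁ + N₂, h ^ N₂ * f₁ + h ^ N₁ * f₂, A.add_mem (A.mul_mem (A.pow_mem hh N₂) hf₁)
      (A.mul_mem (A.pow_mem hh N₁) hf₂), fun z hz => ?_⟩
    simp only [Pi.add_apply, Pi.mul_apply, Pi.pow_apply, h₁ z hz, h₂ z hz, add_pow_expChar_pow]
    ring
  algebraMap_mem' a := ⟨0, algebraMap k (Z → k) (a ^ p ^ e), A.algebraMap_mem _, fun z _ => by simp⟩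

theorem le_powerLocalization (e : ℕ) {A : Subalgebra k (Z → k)} {h : Z → k} (hh : h ∈ A)
    (X : Set Z) : A ≤ powerLocalization p e hh X := fun f hf =>
  ⟨0, f ^ p ^ e, A.pow_mem hf _, fun z _ => by simp⟩

end PowerLocalization

namespace FormTuple

section OpenPart

open TopologicalSpace

variable {k ι : Type*} [Field k] {d : ι → ℕ} {r : ι} {p : ℕ} [ExpChar k p] {e n : ℕ}

theorem regularFunctions_id_le_powerLocalization [Infinite k] (hd : ((d r).factorial : k) ≠ 0)
    {A : Subalgebra k (FormTuple k d → k)} {h : FormTuple k d → k} (hh : h ∈ A)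
    {X : Set (FormTuple k d)} (hA : ∀ i ≠ r, ∀ s, (fun z : FormTuple k d => z i s) ∈ A)
    (hdiag : ∀ v, ∃ f ∈ A, ∀ z ∈ X, f z = h z * z r (Multiset.replicate (d r) v) ^ p ^ e) :
    regularFunctions id ≤ powerLocalization p e hh X := by
  refine regularFunctions_le fun i m => ?_
  by_cases hi : i = r
  · subst hi
    refine (coordForm id i).mem_of_diag_mem hd (powerLocalization p e hh X).toSubmodule
      (fun v => ?_) _
    obtain ⟨f, hf, hfX⟩ := hdiag v
    exact ⟨1, f, hf, fun z hz => by rw [hfX z hz, pow_one]; rfl⟩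
  · exact le_powerLocalization e hh X (hA i hi _)

theorem preimage_orbitZeroLocus_eq {X : Set (FormTuple k d)} (hX : IsClosed X)
    {h : FormTuple k d → k} (hh : h ∈ regularFunctions (shift r n))
    (hlocal : ∀ z : FormTuple k d, ∀ φ ψ, (∀ i < n, φ (stdVec k i) = ψ (stdVec k i)) →
      h (z.pullback φ) = h (z.pullback ψ))
    (hle : regularFunctions id ≤ powerLocalization p e hh X)
    {Z : Set (FormTuple k d)} (hZ : IsClosed Z) :
    (fun z : {z // z ∈ X ∧ h z ≠ 0} => shift r n z.1) ⁻¹' orbitZeroLocus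
        {Q | ∀ z ∈ X, h z ≠ 0 → z.pullback (shiftMap k n) ∈ Z → (shift r n z).eval Q = 0} =
      (fun z => z.1.pullback (shiftMap k n)) ⁻¹' Z := by
  ext ⟨z, hzX, hz⟩
  refine ⟨fun hzW => (isClosed_iff.1 hZ).1 _ fun P hP => ?_, fun hzZ φ Q hQ => ?_⟩
  · obtain ⟨N, f, hf, hfX⟩ := hle (regularFunctions_pullback_le (shiftMap k n)
      (eval_mem_regularFunctions _ P))
    beta_reduce at hfX
    obtain ⟨Q, hQ⟩ := mem_regularFunctions.1 hf
    have hQz : (shift r n z).eval Q = 0 :=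
      eval_eq_zero_of_mem_orbitZeroLocus hzW fun y hyX _ hyZ => by
        rw [hQ, hfX y hyX, hP _ hyZ, zero_pow (pow_ne_zero e (expChar_ne_zero k p)), mul_zero]
    rw [hQ, hfX z hzX] at hQz
    exact eq_zero_of_pow_eq_zero ((mul_eq_zero.1 hQz).resolve_left (pow_ne_zero N hz))
  · rw [shift_pullback]
    refine hQ _ (pullback_mem hX hzX _) ?_ ?_
    · rwa [hlocal z _ LinearMap.id fun i hi => glueMap_stdVec_of_lt hi _ _, pullback_id]
    · rw [pullback_pullback, glueMap_comp_shiftMap, ← pullback_pullback]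
      exact pullback_mem hZ hzZ φ

theorem noetherianSpace_of_le_powerLocalization
    [NoetherianSpace (FormTuple k (shiftDegree d r n))] {X : Set (FormTuple k d)} (hX : IsClosed X)
    {h : FormTuple k d → k} (hh : h ∈ regularFunctions (shift r n))
    (hlocal : ∀ z : FormTuple k d, ∀ φ ψ, (∀ i < n, φ (stdVec k i) = ψ (stdVec k i)) →
      h (z.pullback φ) = h (z.pullback ψ))
    (hle : regularFunctions id ≤ powerLocalization p e hh X) :
    NoetherianSpace {x ∈ X | ∃ φ, h (x.pullback φ) ≠ 0} := by
  have hrange := noetherianSpace_range_of_forall_preimage_eq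
    (fun z : {z // z ∈ X ∧ h z ≠ 0} => shift r n z.1) (fun z => z.1.pullback (shiftMap k n))
    fun Z hZ => ⟨_, isClosed_orbitZeroLocus _, preimage_orbitZeroLocus_eq hX hh hlocal hle hZ⟩
  refine noetherianSpace_of_subset hrange ?_
  rintro x ⟨hxX, φ, hφ⟩
  refine ⟨⟨x.pullback (glueMap n φ LinearMap.id), pullback_mem hX hxX _, ?_⟩, ?_⟩
  · rwa [hlocal x _ φ fun i hi => glueMap_stdVec_of_lt hi _ _]
  · change (x.pullback _).pullback _ = x
    rw [pullback_pullback, glueMap_comp_shiftMap, pullback_id]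

theorem exists_eval_eq_relEval (q : ℕ) (F : RelPoly k d r) :
    ∃ P, ∀ z : FormTuple k d, z.eval P = relEval q z F :=
  mem_regularFunctions.1 <| relEval_mem q (fun i _ => apply_mem_regularFunctions id i)
    fun _ _ => apply_mem_regularFunctions id r _

theorem noetherianSpace_relEval_weightDeriv_ne_zero [Infinite k] (hr : d r ≠ 0)
    (hd : ((d r).factorial : k) ≠ 0)
    (hshift : ∀ n, NoetherianSpace (FormTuple k (shiftDegree d r n)))
    {X : Set (FormTuple k d)} (hX : IsClosed X) {F : RelPoly k d r}
    (hF : ∀ z ∈ X, relEval (p ^ e) z F = 0) (ℓ : ℕ → k) :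
    NoetherianSpace
      {x ∈ X | ∃ φ, relEval (p ^ e) (x.pullback φ) (weightDeriv (p ^ e) ℓ F) ≠ 0} := by
  classical
  obtain ⟨P, hP⟩ := exists_eval_eq_relEval (p ^ e) (weightDeriv (p ^ e) ℓ F)
  obtain ⟨n₁, hn₁⟩ := exists_forall_eval_pullback_eq (d := d) P
  obtain ⟨n₂, hn₂⟩ := ((F.vars ∪ (weightDeriv (p ^ e) ℓ F).vars).biUnion
    fun m => (m : Multiset ℕ).toFinset).exists_nat_subset_range
  have hlt : ∀ m ∈ F.vars ∪ (weightDeriv (p ^ e) ℓ F).vars, ∀ a ∈ m, a < max n₁ n₂ :=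
    fun m hm a ha => lt_max_of_lt_right <| Finset.mem_range.1 <| hn₂ <|
      Finset.mem_biUnion.2 ⟨m, hm, Multiset.mem_toFinset.2 ha⟩
  have hA : ∀ i ≠ r, ∀ s, (fun z : FormTuple k d => z i s) ∈
      regularFunctions (shift r (max n₁ n₂)) := fun i hi s => by
    simpa using apply_mem_regularFunctions_shift (u := 0) (by simp) (.inl hi) s
  have hh : (fun z => relEval (p ^ e) z (weightDeriv (p ^ e) ℓ F)) ∈
      regularFunctions (shift r (max n₁ n₂)) := relEval_mem _ hA fun m hm => by
    have hm0 : (m : Multiset ℕ) ≠ 0 := fun h0 => hr (by rw [← m.card_coe, h0, Multiset.card_zero])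
    simpa using apply_mem_regularFunctions_shift (hlt m (Finset.mem_union_right _ hm)) (.inr hm0) 0
  refine noetherianSpace_of_le_powerLocalization hX hh (fun z φ ψ h => ?_)
    (regularFunctions_id_le_powerLocalization (p := p) (e := e) hd hh hA fun v => ?_)
  · rw [← hP, ← hP]
    exact hn₁ z φ ψ fun i hi => h i (lt_max_of_lt_left hi)
  · obtain ⟨f, hf, hfz⟩ := exists_mem_eq_relEval_weightDeriv_mul (p := p) hr e ℓ v hA
      fun m hm a ha s => apply_mem_regularFunctions_shift (u := {a})
        (by simpa using hlt m (Finset.mem_union_left _ hm) a ha) (.inr (by simp)) s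
    exact ⟨f, hf, fun z hz => hfz z fun φ => hF _ (pullback_mem hX hz φ)⟩

end OpenPart

end FormTuple

/-! ### Induction on the equation -/

section Separability

variable {σ R k : Type*} [CommRing R] [Field k]

theorem coeff_mul_natCast_eq_zero_of_pderiv_eq_zero {F : MvPolynomial σ R}
    (hF : ∀ i, MvPolynomial.pderiv i F = 0) (s : σ →₀ ℕ) (i : σ) : F.coeff s * s i = 0 := by
  classical
  rcases Nat.eq_zero_or_pos (s i) with h0 | hpos
  · simp [h0]
  have hle : Finsupp.single i 1 ≤ s := Finsupp.single_le_iff.2 hpos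
  have hcoeff := congrArg (MvPolynomial.coeff (s - Finsupp.single i 1)) (hF i)
  rw [MvPolynomial.coeff_pderiv, tsub_add_cancel_of_le hle, MvPolynomial.coeff_zero] at hcoeff
  have hcast : (((s - Finsupp.single i 1 : σ →₀ ℕ) i : ℕ) : R) + 1 = s i := by
    simp [Nat.cast_sub hpos]
  rwa [hcast] at hcoeff

theorem map_eq_expand_map_of_pderiv_eq_zero {p : ℕ} [Fact p.Prime] [CharP k p] {g : R →+* k}
    {F G : MvPolynomial σ R} (hF : ∀ i, MvPolynomial.pderiv i (MvPolynomial.map g F) = 0)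
    (hG : ∀ s, G.coeff s = F.coeff (p • s)) :
    MvPolynomial.map g F = MvPolynomial.expand p (MvPolynomial.map g G) := by
  have hp : p ≠ 0 := (Fact.out : p.Prime).ne_zero
  ext s
  by_cases hs : ∀ i, p ∣ s i
  · obtain ⟨t, rfl⟩ : ∃ t, s = p • t :=
      ⟨s.mapRange (· / p) (Nat.zero_div p), Finsupp.ext fun i => by
        simp [Nat.mul_div_cancel' (hs i)]⟩
    rw [MvPolynomial.coeff_expand_smul p hp, MvPolynomial.coeff_map, MvPolynomial.coeff_map, hG]
  · obtain ⟨i, hi⟩ := not_forall.1 hs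
    rw [MvPolynomial.coeff_expand_of_not_dvd _ hi]
    refine (mul_eq_zero.1 (coeff_mul_natCast_eq_zero_of_pderiv_eq_zero hF s i)).resolve_right ?_
    rwa [CharP.cast_eq_zero_iff k p]

theorem totalDegree_lt_of_coeff_eq_coeff_nsmul {p : ℕ} (hp : 1 < p) {F G : MvPolynomial σ R}
    (hG : ∀ s, G.coeff s = F.coeff (p • s)) (hF : F.totalDegree ≠ 0) :
    G.totalDegree < F.totalDegree := by
  refine (Finset.sup_lt_iff (Nat.pos_of_ne_zero hF)).2 fun s hs => ?_
  rw [MvPolynomial.mem_support_iff, hG, ← MvPolynomial.mem_support_iff] at hs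
  have hle : p * s.degree ≤ F.totalDegree :=
    (map_nsmul Finsupp.degree p s).ge.trans (MvPolynomial.le_totalDegree hs)
  change s.degree < _
  rcases Nat.eq_zero_or_pos s.degree with h0 | hpos
  · omega
  · nlinarith

theorem exists_directionalDeriv_ne_zero [Infinite k] {d q : ℕ} (hq : q ≠ 0)
    {F : MvPolynomial (Sym ℕ d) k} {m : Sym ℕ d} (hm : MvPolynomial.pderiv m F ≠ 0) :
    ∃ ℓ : ℕ → k,
      directionalDeriv (fun m : Sym ℕ d => ((m : Multiset ℕ).map ℓ).prod ^ q) F ≠ 0 := by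
  obtain ⟨s, hs⟩ := MvPolynomial.exists_coeff_ne_zero hm
  have hmvars : m ∈ F.vars :=
    not_imp_comm.1 MvPolynomial.pderiv_eq_zero_of_notMem_vars hm
  obtain ⟨ℓ, hℓ⟩ := exists_sum_mul_prod_map_pow_ne_zero hq hmvars
    (b := fun m => (MvPolynomial.pderiv m F).coeff s) hs
  refine ⟨ℓ, fun h => hℓ ?_⟩
  rw [directionalDeriv_eq_sum] at h
  simpa only [MvPolynomial.coeff_sum, MvPolynomial.coeff_C_mul, MvPolynomial.coeff_zero] using
    congrArg (MvPolynomial.coeff s) h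

end Separability

namespace FormTuple

section RelativeInduction

open TopologicalSpace

variable {k ι : Type*} [Field k] {d : ι → ℕ} {r : ι} {p e : ℕ}

theorem relEval_eq_eval_map (q : ℕ) (z : FormTuple k d) (F : RelPoly k d r) :
    relEval q z F =
      MvPolynomial.eval (fun m : Sym ℕ (d r) => z r ((m : Multiset ℕ).map (stdVec k)) ^ q)
        (MvPolynomial.map ((dropForm r z).eval : _ →+* k) F) :=
  MvPolynomial.eval₂_eq_eval_map _ _ F

theorem exists_relEval_one_eq (r : ι) (P : MvPolynomial (ι × Multiset ℕ) k) :
    ∃ F : RelPoly k d r, ∀ z : FormTuple k d, relEval 1 z F = z.eval P := by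
  induction P using MvPolynomial.induction_on with
  | C a => exact ⟨MvPolynomial.C (MvPolynomial.C a), fun z => by simp [relEval]⟩
  | add P Q hP hQ =>
    obtain ⟨F, hF⟩ := hP
    obtain ⟨G, hG⟩ := hQ
    exact ⟨F + G, fun z => by rw [map_add, map_add, hF, hG]⟩
  | mul_X P x hP =>
    obtain ⟨F, hF⟩ := hP
    obtain ⟨i, m⟩ := x
    suffices ∃ G : RelPoly k d r, ∀ z : FormTuple k d, relEval 1 z G = z i (m.map (stdVec k)) by
      obtain ⟨G, hG⟩ := this
      exact ⟨F * G, fun z => by rw [map_mul, map_mul, hF, hG, eval_X]⟩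
    by_cases hi : i = r
    · subst hi
      by_cases hm : m.card = d i
      · exact ⟨MvPolynomial.X ⟨m, hm⟩,
          fun z => (MvPolynomial.eval₂Hom_X' _ _ _).trans (pow_one _)⟩
      · exact ⟨0, fun z => by rw [map_zero, (z i).map_of_card_ne (by rwa [Multiset.card_map])]⟩
    · exact ⟨MvPolynomial.C (MvPolynomial.X (⟨i, hi⟩, m)), fun z =>
        (MvPolynomial.eval₂Hom_C _ _ _).trans (eval_X _ _)⟩

theorem exists_map_weightDeriv_ne_zero [Infinite k] {q : ℕ} (hq : q ≠ 0) {F : RelPoly k d r}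
    {y : FormTuple k (d ∘ (Subtype.val : {i // i ≠ r} → ι))} {m : Sym ℕ (d r)}
    (hm : MvPolynomial.pderiv m (MvPolynomial.map (y.eval : _ →+* k) F) ≠ 0) :
    ∃ ℓ : ℕ → k, MvPolynomial.map (y.eval : _ →+* k) (weightDeriv q ℓ F) ≠ 0 := by
  obtain ⟨ℓ, hℓ⟩ := exists_directionalDeriv_ne_zero hq hm
  refine ⟨ℓ, ?_⟩
  rw [weightDeriv, map_directionalDeriv]
  convert hℓ using 4 with m
  exact y.eval.commutes _

variable {X : Set (FormTuple k d)} {Y : Set (FormTuple k (d ∘ (Subtype.val : {i // i ≠ r} → ι)))}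
  {F : RelPoly k d r}

theorem exists_closed_ssubset_of_coeff_eq_zero {q : ℕ} (hX : IsClosed X) (hY : IsClosed Y)
    (hXY : X ⊆ dropForm r ⁻¹' Y) (hF : ∀ z ∈ X, relEval q z F = 0)
    (hne : ∃ y ∈ Y, MvPolynomial.map (y.eval : _ →+* k) F ≠ 0)
    (hcoeff : ∀ y ∈ Y, ∀ s ≠ 0, y.eval (F.coeff s) = 0) :
    ∃ Y' ⊂ Y, IsClosed Y' ∧ X ⊆ dropForm r ⁻¹' Y' := by
  have hmap : ∀ y ∈ Y, MvPolynomial.map (y.eval : _ →+* k) F =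
      MvPolynomial.C (y.eval (F.coeff 0)) := fun y hy => by
    ext s
    rw [MvPolynomial.coeff_map, MvPolynomial.coeff_C]
    split_ifs with hs
    · rw [← hs]; rfl
    · exact hcoeff y hy s (Ne.symm hs)
  refine ⟨Y ∩ orbitZeroLocus {F.coeff 0}, ⟨Set.inter_subset_left, fun hle => ?_⟩,
    hY.inter (isClosed_orbitZeroLocus _), fun z hz => ⟨hXY hz, fun φ P hP => ?_⟩⟩
  · obtain ⟨y, hy, hFy⟩ := hne
    rw [hmap y hy, eval_eq_zero_of_mem_orbitZeroLocus (hle hy).2 rfl, map_zero] at hFy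
    exact hFy rfl
  · have hzφ := pullback_mem hX hz φ
    have hzero := hF _ hzφ
    rwa [relEval_eq_eval_map, hmap _ (hXY hzφ), MvPolynomial.eval_C, ← Set.mem_singleton_iff.1 hP]
      at hzero

theorem exists_relEval_eq_zero_of_pderiv_eq_zero [ExpChar k p] (hXY : X ⊆ dropForm r ⁻¹' Y)
    (hF : ∀ z ∈ X, relEval (p ^ e) z F = 0)
    {y : FormTuple k (d ∘ (Subtype.val : {i // i ≠ r} → ι))} (hy : y ∈ Y)
    {s : Sym ℕ (d r) →₀ ℕ} (hs : s ≠ 0) (hys : y.eval (F.coeff s) ≠ 0)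
    (hderiv : ∀ y ∈ Y, ∀ m, MvPolynomial.pderiv m (MvPolynomial.map (y.eval : _ →+* k) F) = 0) :
    ∃ G : RelPoly k d r, G.totalDegree < F.totalDegree ∧
      (∀ z ∈ X, relEval (p ^ (e + 1)) z G = 0) ∧ MvPolynomial.map (y.eval : _ →+* k) G ≠ 0 := by
  obtain ⟨m, hm⟩ := Finsupp.ne_iff.1 hs
  have hcast : (s m : k) = 0 :=
    (mul_eq_zero.1 (coeff_mul_natCast_eq_zero_of_pderiv_eq_zero (hderiv y hy) s m)).resolve_left
      (by rwa [MvPolynomial.coeff_map])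
  rcases ‹ExpChar k p› with _ | hp
  · exact absurd (Nat.cast_eq_zero.1 hcast) hm
  have : Fact p.Prime := ⟨hp⟩
  obtain ⟨G, hG⟩ := exists_coeff_eq_coeff_nsmul hp.ne_zero F
  have hexpand : ∀ y ∈ Y, _ := fun y hy => map_eq_expand_map_of_pderiv_eq_zero (hderiv y hy) hG
  have hF0 : F.coeff s ≠ 0 := fun h => hys (by rw [h, map_zero])
  have hdeg : F.totalDegree ≠ 0 := fun h => hm ((Finsupp.degree_eq_zero_iff _).1 (Nat.le_zero.1
    ((MvPolynomial.le_totalDegree (MvPolynomial.mem_support_iff.2 hF0)).trans h.le)) ▸ rfl)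
  refine ⟨G, totalDegree_lt_of_coeff_eq_coeff_nsmul hp.one_lt hG hdeg, fun z hz => ?_, fun h => ?_⟩
  · rw [← hF z hz, relEval_eq_eval_map, relEval_eq_eval_map, hexpand _ (hXY hz),
      MvPolynomial.eval_expand]
    simp only [Pi.pow_def, ← pow_mul, ← pow_succ]
  · have hmap := hexpand y hy
    rw [h, map_zero] at hmap
    exact hys ((MvPolynomial.coeff_map _ F s).symm.trans (congrArg (MvPolynomial.coeff s) hmap))

theorem noetherianSpace_of_relEval_eq_zero [Infinite k] [ExpChar k p] (hr : d r ≠ 0)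
    (hd : ((d r).factorial : k) ≠ 0)
    (hshift : ∀ n, NoetherianSpace (FormTuple k (shiftDegree d r n))) (hY : IsClosed Y)
    (hproper : ∀ Y' ⊂ Y, IsClosed Y' → NoetherianSpace (dropForm r ⁻¹' Y')) (hX : IsClosed X)
    (hXY : X ⊆ dropForm r ⁻¹' Y) (hF : ∀ z ∈ X, relEval (p ^ e) z F = 0)
    (hne : ∃ y ∈ Y, MvPolynomial.map (y.eval : _ →+* k) F ≠ 0) : NoetherianSpace X := by
  induction hn : F.totalDegree using Nat.strong_induction_on generalizing e F X with
  | _ n ih =>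
    subst hn
    by_cases hcoeff : ∀ y ∈ Y, ∀ s ≠ 0, y.eval (F.coeff s) = 0
    · obtain ⟨Y', hss, hY', hXY'⟩ := exists_closed_ssubset_of_coeff_eq_zero hX hY hXY hF hne hcoeff
      exact noetherianSpace_of_subset (hproper Y' hss hY') hXY'
    by_cases hderiv : ∀ y ∈ Y, ∀ m,
        MvPolynomial.pderiv m (MvPolynomial.map (y.eval : _ →+* k) F) = 0
    · push Not at hcoeff
      obtain ⟨y, hy, s, hs, hys⟩ := hcoeff
      obtain ⟨G, hdeg, hG, hyG⟩ := exists_relEval_eq_zero_of_pderiv_eq_zero hXY hF hy hs hys hderiv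
      exact ih _ hdeg hX hXY hG ⟨y, hy, hyG⟩ rfl
    · push Not at hderiv
      obtain ⟨y, hy, m, hm⟩ := hderiv
      obtain ⟨ℓ, hℓ⟩ := exists_map_weightDeriv_ne_zero (pow_ne_zero e (expChar_ne_zero k p)) hm
      obtain ⟨P, hP⟩ := exists_eval_eq_relEval (p ^ e) (weightDeriv (p ^ e) ℓ F)
      have hdeg : F.totalDegree ≠ 0 := fun h => hm <| by
        rw [MvPolynomial.totalDegree_eq_zero_iff_eq_C.1 h]
        simp
      have hclosedPart : NoetherianSpace ↑(X ∩ orbitZeroLocus {P}) :=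
        ih _ (totalDegree_directionalDeriv_lt _ hdeg) (hX.inter (isClosed_orbitZeroLocus _))
          (Set.inter_subset_left.trans hXY)
          (fun z hz => (hP z).symm.trans (eval_eq_zero_of_mem_orbitZeroLocus hz.2 rfl))
          ⟨y, hy, hℓ⟩ rfl
      have hopenPart := noetherianSpace_relEval_weightDeriv_ne_zero hr hd hshift hX hF ℓ
      refine noetherianSpace_of_subset_union hclosedPart hopenPart fun x hx => ?_
      by_cases hxP : x ∈ orbitZeroLocus {P}
      · exact .inl ⟨hx, hxP⟩
      · simp only [orbitZeroLocus, Set.mem_singleton_iff, forall_eq, Set.mem_ofPred_eq, hP,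
          not_forall] at hxP
        exact .inr ⟨hx, hxP⟩

theorem noetherianSpace_of_shift [Infinite k] (hr : d r ≠ 0) (hd : ((d r).factorial : k) ≠ 0)
    (hshift : ∀ n, NoetherianSpace (FormTuple k (shiftDegree d r n)))
    [NoetherianSpace (FormTuple k (d ∘ (Subtype.val : {i // i ≠ r} → ι)))] :
    NoetherianSpace (FormTuple k d) := by
  obtain ⟨p, _⟩ := ExpChar.exists k
  suffices ∀ Y : Closeds (FormTuple k (d ∘ (Subtype.val : {i // i ≠ r} → ι))),
      NoetherianSpace (dropForm (k := k) (d := d) r ⁻¹' Y.carrier) by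
    exact noetherian_univ_iff.1 (this ⊤)
  intro Y
  induction Y using WellFoundedLT.induction with
  | _ Y ih =>
    refine noetherianSpace_of_forall_closed_ssubset (Y.isClosed.preimage (continuous_reindex _))
      fun X hXY hX => ?_
    obtain ⟨z, hzY, hzX⟩ := Set.exists_of_ssubset hXY
    have hsep := mt ((isClosed_iff.1 hX).1 z) hzX
    push Not at hsep
    obtain ⟨P, hP, hPz⟩ := hsep
    obtain ⟨F, hF⟩ := exists_relEval_one_eq (d := d) r P
    refine noetherianSpace_of_relEval_eq_zero (p := p) (e := 0) (F := F) hr hd hshift Y.isClosed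
      (fun Y' hss hY' => ih ⟨Y', hY'⟩ hss) hX hXY.subset (fun x hx => ?_)
      ⟨dropForm r z, hzY, fun h => hPz ?_⟩
    · rw [pow_zero, hF, hP x hx]
    · rw [← hF, relEval_eq_eval_map, h, map_zero]

end RelativeInduction

section Noetherian

open TopologicalSpace

variable {k ι : Type*} [Field k] {d : ι → ℕ}

theorem regularFunctions_id_le_range_aeval (hd : ∀ i, d i = 0) :
    regularFunctions (id : FormTuple k d → FormTuple k d) ≤
      (AlgHom.pi fun z : FormTuple k d => MvPolynomial.aeval fun i => z i 0).range := by
  refine regularFunctions_le fun i m => ?_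
  rcases eq_or_ne m 0 with rfl | hm
  · exact ⟨MvPolynomial.X i, funext fun z => MvPolynomial.aeval_X _ _⟩
  · refine ⟨0, funext fun z => ((z i).map_of_card_ne ?_).symm⟩
    rwa [Multiset.card_map, hd i, Ne, Multiset.card_eq_zero]

theorem noetherianSpace_of_degree_eq_zero [Finite ι] (hd : ∀ i, d i = 0) :
    NoetherianSpace (FormTuple k d) := by
  rw [← noetherian_univ_iff, ← Set.range_id]
  let ev (z : FormTuple k d) : MvPolynomial ι k →ₐ[k] k := MvPolynomial.aeval fun i => z i 0
  refine noetherianSpace_range_of_forall_preimage_eq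
    (fun z => (⟨RingHom.ker (ev z), RingHom.ker_isPrime _⟩ : PrimeSpectrum (MvPolynomial ι k))) id
    fun Z hZ => ⟨PrimeSpectrum.zeroLocus {Q | ∀ z ∈ Z, ev z Q = 0},
      PrimeSpectrum.isClosed_zeroLocus _, Set.ext fun x => ?_⟩
  refine ⟨fun hx => (isClosed_iff.1 hZ).1 x fun P hP => ?_, fun hx Q hQ => hQ x hx⟩
  obtain ⟨Q, hQ⟩ := regularFunctions_id_le_range_aeval hd (eval_mem_regularFunctions id P)
  have hQP : ∀ z : FormTuple k d, ev z Q = z.eval P := congrFun hQ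
  rw [← hQP]
  exact hx fun z hz => (hQP z).trans (hP z hz)

theorem cutExpand_shiftDegree [Fintype ι] [DecidableEq ι] {r : ι} (hr : ∀ i, d i ≤ d r) (n : ℕ) :
    Relation.CutExpand (· < ·) (∑ i, ({shiftDegree d r n i} : Multiset ℕ)) (∑ i, {d i}) := by
  rw [Fintype.sum_sum_type, Fintype.sum_eq_add_sum_subtype_ne _ r,
    add_comm ({d r} : Multiset ℕ)]
  refine (Relation.cutExpand_add_left _).2 (Relation.cutExpand_singleton fun a ha => ?_)
  obtain ⟨p, -, hp⟩ := Multiset.mem_sum.1 ha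
  have hlt : d p.1 - (p.2.1 + 1) < d p.1 := Nat.sub_lt_self (Nat.succ_pos _) p.2.1.2
  exact Multiset.mem_singleton.1 hp ▸ hlt.trans_le (hr p.1)

theorem cutExpand_subtype_ne [Fintype ι] [DecidableEq ι] (d : ι → ℕ) (r : ι) :
    Relation.CutExpand (· < ·) (∑ i : {i // i ≠ r}, ({d i} : Multiset ℕ)) (∑ i, {d i}) := by
  rw [Fintype.sum_eq_add_sum_subtype_ne _ r, add_comm ({d r} : Multiset ℕ)]
  simpa using (Relation.cutExpand_add_left _).2 Relation.cutExpand_zero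

theorem shiftDegree_le (d : ι → ℕ) (r : ι) (n : ℕ) (i : ShiftIndex d r n) :
    ∃ j, shiftDegree d r n i ≤ d j := by
  rcases i with i | p
  · exact ⟨i, le_rfl⟩
  · exact ⟨p.1, Nat.sub_le _ _⟩

theorem noetherianSpace_of_factorial_ne_zero [Infinite k] [Finite ι]
    (hd : ∀ i, ((d i).factorial : k) ≠ 0) : NoetherianSpace (FormTuple k d) := by
  classical
  have := Fintype.ofFinite ι
  induction hs : ∑ i, ({d i} : Multiset ℕ) using
    (WellFounded.cutExpand Nat.lt_wfRel.wf).induction generalizing ι with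
  | _ s ih =>
    subst hs
    by_cases h0 : ∀ i, d i = 0
    · exact noetherianSpace_of_degree_eq_zero h0
    obtain ⟨i, hi⟩ := not_forall.1 h0
    have := Nonempty.intro i
    obtain ⟨r, hr⟩ := Finite.exists_max d
    have := ih _ (cutExpand_subtype_ne d r) (d := d ∘ Subtype.val) (fun i => hd i.1) _ rfl
    refine noetherianSpace_of_shift (fun h => hi (Nat.le_zero.1 (h ▸ hr i))) (hd r) fun n =>
      ih _ (cutExpand_shiftDegree hr n) (fun j => ?_) _ rfl
    obtain ⟨i, hji⟩ := shiftDegree_le d r n j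
    exact ne_zero_of_dvd_ne_zero (hd i) (Nat.cast_dvd_cast (Nat.factorial_dvd_factorial hji))

end Noetherian

end FormTuple

/-! ### Density of the finitary linear group -/

section BlockMap

variable {k : Type*} [Field k] {N : ℕ}

/-- The inclusion of the span of `e₀, …, e_{N-1}`. -/
noncomputable def finIncl (k : Type*) [Field k] (N : ℕ) : (Fin N →₀ k) →ₗ[k] (ℕ →₀ k) :=
  Finsupp.lmapDomain k k Fin.val

/-- The projection onto the span of `e₀, …, e_{N-1}`. -/
noncomputable def finProj (k : Type*) [Field k] (N : ℕ) : (ℕ →₀ k) →ₗ[k] (Fin N →₀ k) :=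
  Finsupp.lcomapDomain Fin.val Fin.val_injective

theorem range_finIncl : LinearMap.range (finIncl k N) =
    Submodule.span k {v : ℕ →₀ k | ∃ j < N, v = Finsupp.single j (1 : k)} := by
  rw [finIncl, Finsupp.range_lmapDomain]
  congr 1
  ext v
  simp [Fin.exists_iff, eq_comm]

theorem finProj_finIncl (v : Fin N →₀ k) : finProj k N (finIncl k N v) = v :=
  Finsupp.leftInverse_lcomapDomain_mapDomain Fin.val Fin.val_injective v

theorem finIncl_finProj {v : ℕ →₀ k} (hv : ∀ j ∈ v.support, j < N) :
    finIncl k N (finProj k N v) = v :=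
  Finsupp.mapDomain_comapDomain _ Fin.val_injective v fun j hj => ⟨⟨j, hv j hj⟩, rfl⟩

theorem finProj_stdVec_of_le {i : ℕ} (hi : N ≤ i) : finProj k N (stdVec k i) = 0 := by
  ext j
  exact Finsupp.single_eq_of_ne (by omega)

/-- The endomorphism which is `A` on the span of `e₀, …, e_{N-1}` and fixes `eᵢ` for `N ≤ i`. -/
noncomputable def blockMap (N : ℕ) : Module.End k (Fin N →₀ k) →* Module.End k (ℕ →₀ k) where
  toFun A := 1 + finIncl k N ∘ₗ (A - 1) ∘ₗ finProj k N
  map_one' := LinearMap.ext fun v => by simp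
  map_mul' A B := LinearMap.ext fun v => by
    simp only [LinearMap.add_apply, Module.End.one_apply, LinearMap.comp_apply,
      LinearMap.sub_apply, Module.End.mul_apply, map_sub, map_add, finProj_finIncl, add_sub_cancel]
    abel

theorem blockMap_apply (A : Module.End k (Fin N →₀ k)) (v : ℕ →₀ k) :
    blockMap N A v = v + finIncl k N (A (finProj k N v) - finProj k N v) := rfl

theorem blockMap_finIncl (A : Module.End k (Fin N →₀ k)) (v : Fin N →₀ k) :
    blockMap N A (finIncl k N v) = finIncl k N (A v) := by
  rw [blockMap_apply, finProj_finIncl, map_sub, add_sub_cancel]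

theorem blockMap_add_smul_one (A : Module.End k (Fin N →₀ k)) (t : k) :
    blockMap N (A + t • 1) = blockMap N A + t • (finIncl k N ∘ₗ finProj k N) :=
  LinearMap.ext fun v => by
    simp only [blockMap_apply, LinearMap.add_apply, LinearMap.smul_apply, Module.End.one_apply,
      map_sub, map_add, map_smul, LinearMap.comp_apply]
    abel

theorem exists_isGLinf_symm_eq_blockMap {A : Module.End k (Fin N →₀ k)} (hA : IsUnit A) :
    ∃ g : (ℕ →₀ k) ≃ₗ[k] (ℕ →₀ k), IsGLinf g ∧ g.symm.toLinearMap = blockMap N A := by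
  obtain ⟨u, rfl⟩ := hA
  let g := LinearMap.GeneralLinearGroup.generalLinearEquiv k (ℕ →₀ k) (Units.map (blockMap N) u⁻¹)
  refine ⟨g, ⟨N, fun i hi => ?_, ?_⟩, rfl⟩
  · change blockMap N _ (stdVec k i) = _
    rw [blockMap_apply, finProj_stdVec_of_le hi]
    simp
  · change Submodule.map (blockMap N (u⁻¹ : (Module.End k (Fin N →₀ k))ˣ).1) _ = _
    have hcomp : blockMap N (u⁻¹).1 ∘ₗ finIncl k N = finIncl k N ∘ₗ (u⁻¹).1 :=
      LinearMap.ext (blockMap_finIncl _)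
    have hsurj : LinearMap.range (u⁻¹).1 = ⊤ := LinearMap.range_eq_top.2
      ((Module.End.isUnit_iff _).1 u⁻¹.isUnit).2
    rw [← range_finIncl, ← LinearMap.range_comp, hcomp, LinearMap.range_comp, hsurj,
      Submodule.map_top]

theorem infinite_setOf_isUnit_add_smul_one [Infinite k] {V : Type*} [AddCommGroup V] [Module k V]
    [FiniteDimensional k V] (A : Module.End k V) : {t : k | IsUnit (A + t • 1)}.Infinite := by
  refine (A.finite_spectrum.preimage neg_injective.injOn).infinite_compl.mono fun t ht => ?_
  have hunit : IsUnit (algebraMap k (Module.End k V) (-t) - A) := by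
    simpa [spectrum.mem_iff] using ht
  simpa [Algebra.algebraMap_eq_smul_one, add_comm] using hunit.neg

theorem exists_blockMap_stdVec_eq (φ : (ℕ →₀ k) →ₗ[k] (ℕ →₀ k)) (n : ℕ) :
    ∃ (N : ℕ) (A : Module.End k (Fin N →₀ k)),
      ∀ i < n, blockMap N A (stdVec k i) = φ (stdVec k i) := by
  classical
  obtain ⟨N, hN⟩ := (Finset.range n ∪
    (Finset.range n).biUnion fun i => (φ (stdVec k i)).support).exists_nat_subset_range
  refine ⟨N, finProj k N ∘ₗ φ ∘ₗ finIncl k N, fun i hi => ?_⟩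
  have hiN : finIncl k N (finProj k N (stdVec k i)) = stdVec k i :=
    finIncl_finProj fun j hj => by
      obtain rfl := Finset.mem_singleton.1 (Finsupp.support_single_subset hj)
      exact Finset.mem_range.1 (hN (Finset.mem_union_left _ (Finset.mem_range.2 hi)))
  have hφN : finIncl k N (finProj k N (φ (stdVec k i))) = φ (stdVec k i) :=
    finIncl_finProj fun j hj => Finset.mem_range.1 <| hN <| Finset.mem_union_right _ <|
      Finset.mem_biUnion.2 ⟨i, Finset.mem_range.2 hi, hj⟩
  rw [← hiN, blockMap_finIncl]
  simp only [LinearMap.comp_apply, hiN, hφN]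

theorem FormTuple.eval_pullback_eq_zero_of_forall_isGLinf [Infinite k] {ι : Type*} {d : ι → ℕ}
    {z : FormTuple k d} {P : MvPolynomial (ι × Multiset ℕ) k}
    (h : ∀ g : (ℕ →₀ k) ≃ₗ[k] (ℕ →₀ k), IsGLinf g → (z.pullback g.symm.toLinearMap).eval P = 0)
    (φ : (ℕ →₀ k) →ₗ[k] (ℕ →₀ k)) : (z.pullback φ).eval P = 0 := by
  obtain ⟨n, hn⟩ := exists_forall_eval_pullback_eq (d := d) P
  obtain ⟨N, A, hA⟩ := exists_blockMap_stdVec_eq φ n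
  have hline : z.lineHom (blockMap N A) (finIncl k N ∘ₗ finProj k N) P = 0 := by
    refine eq_zero_of_infinite_isRoot _
      ((infinite_setOf_isUnit_add_smul_one A).mono fun t ht => ?_)
    obtain ⟨g, hg, hgA⟩ := exists_isGLinf_symm_eq_blockMap ht
    rw [Set.mem_ofPred_eq, IsRoot, eval_lineHom, ← blockMap_add_smul_one, ← hgA, h g hg]
  have hzero := z.eval_lineHom (blockMap N A) (finIncl k N ∘ₗ finProj k N) 0 P
  rw [hline, eval_zero, zero_smul, add_zero] at hzero
  rw [← hn z _ _ hA, ← hzero]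

end BlockMap

/-! ### Cubic forms -/

section MapUniv

variable {α ι : Type*} [Fintype ι]

theorem exists_perm_of_map_univ_eq {v w : ι → α}
    (h : Finset.univ.val.map v = Finset.univ.val.map w) : ∃ σ : Equiv.Perm ι, v = w ∘ σ := by
  classical
  have hcard (u : ι → α) (a : α) :
      Fintype.card {i // u i = a} = (Finset.univ.val.map u).count a := by
    rw [Multiset.count_map, Fintype.card_subtype, Finset.card_def, Finset.filter_val]
    simp only [eq_comm]
  have hfiber (a : α) : {i // v i = a} ≃ {i // w i = a} :=
    Fintype.equivOfCardEq (by rw [hcard, hcard, h])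
  exact ⟨Equiv.ofFiberEquiv hfiber, funext fun i => (Equiv.ofFiberEquiv_map hfiber i).symm⟩

theorem exists_map_univ_eq {d : ℕ} {s : Multiset α} (hs : s.card = d) :
    ∃ v : Fin d → α, Finset.univ.val.map v = s := by
  obtain ⟨l, rfl⟩ : ∃ l : List α, ↑l = s := ⟨s.toList, s.coe_toList⟩
  obtain rfl : l.length = d := hs
  exact ⟨l.get, by rw [Fin.univ_val_map, List.ofFn_get]⟩

end MapUniv

namespace SymmForm

variable {k V W : Type*} [CommRing k] [AddCommGroup V] [Module k V] [AddCommGroup W] [Module k W]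
  {d : ℕ} {T : MultilinearMap k (fun _ : Fin d => V) W}

open Classical in
/-- The value of a symmetric multilinear map at a multiset of arguments, `0` unless there are `d`
of them. -/
noncomputable def multisetValue (T : MultilinearMap k (fun _ : Fin d => V) W) (s : Multiset V) :
    W :=
  if h : ∃ v : Fin d → V, Finset.univ.val.map v = s then T h.choose else 0

theorem multisetValue_map_univ (hT : ∀ (σ : Equiv.Perm (Fin d)) v, T (v ∘ σ) = T v)
    (v : Fin d → V) : multisetValue T (Finset.univ.val.map v) = T v := by
  have h : ∃ w : Fin d → V, Finset.univ.val.map w = Finset.univ.val.map v := ⟨v, rfl⟩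
  obtain ⟨σ, hσ⟩ := exists_perm_of_map_univ_eq h.choose_spec
  rw [multisetValue, dif_pos h, hσ, hT]

theorem multisetValue_of_card_ne {s : Multiset V} (hs : s.card ≠ d) : multisetValue T s = 0 :=
  dif_neg <| by
    rintro ⟨v, rfl⟩
    simp at hs

theorem exists_linearMap_eq_multisetValue_cons
    (hT : ∀ (σ : Equiv.Perm (Fin d)) v, T (v ∘ σ) = T v) (s : Multiset V) :
    ∃ f : V →ₗ[k] W, ∀ x, multisetValue T (x ::ₘ s) = f x := by
  by_cases hs : s.card + 1 = d
  · obtain ⟨n, rfl, hn⟩ : ∃ n, d = n + 1 ∧ s.card = n := ⟨s.card, hs.symm, rfl⟩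
    obtain ⟨v, rfl⟩ := exists_map_univ_eq hn
    have hcons (x : V) : x ::ₘ Finset.univ.val.map v =
        Finset.univ.val.map (Fin.cons x v : Fin (n + 1) → V) := by
      simp only [Fin.univ_val_map, List.ofFn_succ, Fin.cons_zero, Fin.cons_succ,
        Multiset.cons_coe]
    refine ⟨⟨⟨fun x => T (Fin.cons x v), T.cons_add v⟩, T.cons_smul v⟩, fun x => ?_⟩
    rw [hcons, multisetValue_map_univ hT]
    rfl
  · exact ⟨0, fun x => multisetValue_of_card_ne (by rwa [Multiset.card_cons])⟩

/-- A symmetric multilinear map as a symmetric form. -/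
noncomputable def ofMultilinear (T : MultilinearMap k (fun _ : Fin d => V) W)
    (hT : ∀ (σ : Equiv.Perm (Fin d)) v, T (v ∘ σ) = T v) : SymmForm k V W d where
  toFun := multisetValue T
  map_of_card_ne' _ := multisetValue_of_card_ne
  map_add_cons' x y s := by
    obtain ⟨f, hf⟩ := exists_linearMap_eq_multisetValue_cons hT s
    simp only [hf, map_add]
  map_smul_cons' a x s := by
    obtain ⟨f, hf⟩ := exists_linearMap_eq_multisetValue_cons hT s
    simp only [hf, map_smul]

theorem ofMultilinear_map_univ (hT : ∀ (σ : Equiv.Perm (Fin d)) v, T (v ∘ σ) = T v)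
    (v : Fin d → V) : ofMultilinear T hT (Finset.univ.val.map v) = T v :=
  multisetValue_map_univ hT v

end SymmForm

section Cubic

variable {k : Type*} [Field k] {T : MultilinearMap k (fun _ : Fin 3 => (ℕ →₀ k)) k}

/-- A cubic form, as a tuple consisting of a single form. -/
noncomputable def cubicTuple (hT : IsSymTri T) : FormTuple k fun _ : Unit => 3 :=
  fun _ => SymmForm.ofMultilinear T hT

/-- The coordinate `T (eᵢ, eⱼ, eₗ)` of a cubic form, as a coordinate of the corresponding tuple. -/
def cubicCoord (p : ℕ × ℕ × ℕ) : Unit × Multiset ℕ := ((), {p.1, p.2.1, p.2.2})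

theorem eval_pullback_cubicTuple (hT : IsSymTri T) (φ : (ℕ →₀ k) →ₗ[k] (ℕ →₀ k))
    (P : MvPolynomial (ℕ × ℕ × ℕ) k) :
    ((cubicTuple hT).pullback φ).eval (MvPolynomial.rename cubicCoord P) =
      coordEval (T.compLinearMap fun _ => φ) P := by
  rw [FormTuple.eval, MvPolynomial.aeval_rename, coordEval, MvPolynomial.aeval_eq_eval]
  congr 2
  funext p
  exact SymmForm.ofMultilinear_map_univ hT fun j =>
    φ (![stdVec k p.1, stdVec k p.2.1, stdVec k p.2.2] j)

theorem noetherianSpace_cubicTuple [Infinite k] (h2 : (2 : k) ≠ 0) (h3 : (3 : k) ≠ 0) :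
    TopologicalSpace.NoetherianSpace (FormTuple k fun _ : Unit => 3) := by
  refine FormTuple.noetherianSpace_of_factorial_ne_zero fun _ => ?_
  have h6 : ((Nat.factorial 3 : ℕ) : k) = 2 * 3 := by norm_num [Nat.factorial]
  exact h6 ▸ mul_ne_zero h2 h3

theorem mem_orbitZeroLocus_of_forall_isGLinf [Infinite k] (hT : IsSymTri T)
    {C : Set (MvPolynomial (ℕ × ℕ × ℕ) k)}
    (h : ∀ g : (ℕ →₀ k) ≃ₗ[k] (ℕ →₀ k), IsGLinf g → ∀ P ∈ C,
      coordEval (T.compLinearMap fun _ => g.symm.toLinearMap) P = 0) :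
    cubicTuple hT ∈ FormTuple.orbitZeroLocus (MvPolynomial.rename cubicCoord '' C) := by
  rintro φ _ ⟨P, hP, rfl⟩
  refine FormTuple.eval_pullback_eq_zero_of_forall_isGLinf (fun g hg => ?_) φ
  rw [eval_pullback_cubicTuple, h g hg P hP]

theorem coordEval_eq_zero_of_mem_orbitZeroLocus (hT : IsSymTri T)
    {C : Set (MvPolynomial (ℕ × ℕ × ℕ) k)}
    (h : cubicTuple hT ∈ FormTuple.orbitZeroLocus (MvPolynomial.rename cubicCoord '' C))
    {P : MvPolynomial (ℕ × ℕ × ℕ) k} (hP : P ∈ C) : coordEval T P = 0 := by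
  have hzero := h LinearMap.id _ (Set.mem_image_of_mem _ hP)
  rwa [eval_pullback_cubicTuple, MultilinearMap.compLinearMap_id] at hzero

end Cubic

theorem cubics_topologically_noetherian_general {k : Type*} [Field k] [Infinite k]
    (h2 : (2 : k) ≠ 0) (h3 : (3 : k) ≠ 0)
    (Z : Set (MultilinearMap k (fun _ : Fin 3 => (ℕ →₀ k)) k))
    (hstable : ∀ T ∈ Z, ∀ g : (ℕ →₀ k) ≃ₗ[k] (ℕ →₀ k), IsGLinf g →
      T.compLinearMap (fun _ => g.symm.toLinearMap) ∈ Z)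
    (hclosed : ∃ C : Set (MvPolynomial (ℕ × ℕ × ℕ) k),
      Z = {T | IsSymTri T ∧ ∀ P ∈ C, coordEval T P = 0}) :
    ∃ (m : ℕ) (h : Fin m → MvPolynomial (ℕ × ℕ × ℕ) k),
      Z = {T | IsSymTri T ∧
        ∀ (g : (ℕ →₀ k) ≃ₗ[k] (ℕ →₀ k)), IsGLinf g → ∀ i : Fin m,
          coordEval (T.compLinearMap (fun _ => g.symm.toLinearMap)) (h i) = 0} := by
  classical
  have := noetherianSpace_cubicTuple h2 h3
  obtain ⟨C, rfl⟩ := hclosed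
  obtain ⟨s, hsC, hs⟩ := FormTuple.exists_finset_orbitZeroLocus_eq (d := fun _ : Unit => 3)
    (MvPolynomial.rename (R := k) cubicCoord '' C)
  obtain ⟨F, hFC, rfl⟩ := Finset.subset_set_image_iff.1 hsC
  refine ⟨F.card, fun i => F.equivFin.symm i, Set.Subset.antisymm (fun T hT => ⟨hT.1, ?_⟩) ?_⟩
  · exact fun g hg i => (hstable T hT g hg).2 _ (hFC (F.equivFin.symm i).2)
  · rintro T ⟨hT, hF⟩
    refine ⟨hT, fun P hP => coordEval_eq_zero_of_mem_orbitZeroLocus hT ?_ hP⟩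
    rw [← hs, Finset.coe_image]
    refine mem_orbitZeroLocus_of_forall_isGLinf hT fun g hg P hP => ?_
    simpa using hF g hg (F.equivFin ⟨P, hP⟩)

/-- Topological noetherianity of `P₃(k^∞)`: any `GL∞`-stable Zariski-closed subset of
the space of symmetric trilinear forms on `ℕ →₀ k` is cut out by finitely many
`GL∞`-orbits of coordinate polynomial equations. -/
theorem cubics_topologically_noetherian {k : Type*} [Field k] [IsAlgClosed k]
    (h2 : (2 : k) ≠ 0) (h3 : (3 : k) ≠ 0)
    (Z : Set (MultilinearMap k (fun _ : Fin 3 => (ℕ →₀ k)) k))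
    (hsym : ∀ T ∈ Z, IsSymTri T)
    (hstable : ∀ T ∈ Z, ∀ g : (ℕ →₀ k) ≃ₗ[k] (ℕ →₀ k), IsGLinf g →
      T.compLinearMap (fun _ => g.symm.toLinearMap) ∈ Z)
    (hclosed : ∃ C : Set (MvPolynomial (ℕ × ℕ × ℕ) k),
      Z = {T | IsSymTri T ∧ ∀ P ∈ C, coordEval T P = 0}) :
    ∃ (m : ℕ) (h : Fin m → MvPolynomial (ℕ × ℕ × ℕ) k),
      Z = {T | IsSymTri T ∧
        ∀ (g : (ℕ →₀ k) ≃ₗ[k] (ℕ →₀ k)), IsGLinf g → ∀ i : Fin m,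
          coordEval (T.compLinearMap (fun _ => g.symm.toLinearMap)) (h i) = 0} := by
  exact cubics_topologically_noetherian_general h2 h3 Z hstable hclosed
end
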